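/- Let Ω ⊆ ℂ be a domain such that (ℂ∪{∞})∖Ω has exactly two connected components: V₀ containing ∞, and E, where E is the closure of the Jordan domain U bounded by a rectifiable Jordan curve δ (so that the boundary of E equals the image δ* of δ). Let f be holomorphic on Ω and admit a continuous extension to Ω ∪ δ*. Then the following are equivalent: (i) for every n = 1, 2, … there exists a holomorphic function φ_n on Ω with φ_n^{(n)} = f on Ω; (ii) ∫_δ P(z) f(z) dz = 0 for every analytic polynomial P; (iii) f extends holomorphically to the open set Ω ∪ E, i.e., there is a holomorphic function g on Ω ∪ E with g = f on Ω. -/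

import Mathlib

open Set Filter Topology Polynomial MeasureTheory

/-- `I` is the Riemann–Stieltjes integral `∫_a^b g (δ t) dδ(t)`: for every `ε > 0` there is a
mesh size `d > 0` such that every Riemann–Stieltjes sum over a tagged partition of `[a, b]` of
mesh `< d` is `ε`-close to `I`. -/
def IsRSIntegral (g : ℂ → ℂ) (δ : ℝ → ℂ) (a b : ℝ) (I : ℂ) : Prop :=
  ∀ ε > (0 : ℝ), ∃ d > (0 : ℝ), ∀ (n : ℕ) (t : Fin (n + 1) → ℝ) (ξ : Fin n → ℝ),
    Monotone t → t 0 = a → t (Fin.last n) = b →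
    (∀ i : Fin n, ξ i ∈ Set.Icc (t i.castSucc) (t i.succ)) →
    (∀ i : Fin n, t i.succ - t i.castSucc < d) →
    ‖(∑ i : Fin n, g (δ (ξ i)) * (δ (t i.succ) - δ (t i.castSucc))) - I‖ < ε

/-- `δ : [a, b] → ℂ` is a rectifiable Jordan curve: continuous, of bounded variation,
closed (`δ a = δ b`) and injective on `[a, b)`. -/
def IsRectifiableJordanCurve (δ : ℝ → ℂ) (a b : ℝ) : Prop :=
  a < b ∧ ContinuousOn δ (Set.Icc a b) ∧ BoundedVariationOn δ (Set.Icc a b) ∧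
    δ a = δ b ∧ Set.InjOn δ (Set.Ico a b)

/-!
Parametrized by arc length, `δ` becomes a `1`-Lipschitz loop `γ`. The Cauchy–Pompeiu formula and
Fubini express `∫_γ p` as the integral of `∂p/∂z̄` against the winding number of `γ`, which vanishes
off `E` and is a nonzero constant inside, so `∫_E ∂p/∂z̄ = κ ∫_γ p` with `κ ≠ 0` for smooth `p`.
Rectifiability provides cutoffs around `E` whose gradients shrink to `γ` while staying bounded in
`L¹`; hence `∫_γ f` is a limit of area integrals even for `f` that is only continuous up to `γ`, and
for holomorphic `f` it is the pairing of `f` with `∂χ/∂z̄` for any test function `χ` that equals `1`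
near `E`.

(i) ⇒ (ii): integrating by parts, `P f` has a primitive on `Ω`, so it pairs to zero with `∂χ/∂z̄`.
(ii) ⇒ (iii): the Cauchy kernels with poles off `E` are uniform limits of polynomials on `E`, so
`∫_γ f(ζ) / (ζ - z) dζ` vanishes on `Ω` and the Cauchy transform of `f ∂χ/∂z̄` extends `f`.
(iii) ⇒ (i): the complement of `Ω ∪ E` in the sphere is connected, so by Runge's theorem `f` is a
locally uniform limit of polynomials, and the polynomial primitives converge as well.
-/

open scoped ContDiff

/-! ### Arc-length reparametrization -/

section Reparametrization

variable {F : Type*}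

lemma continuousOn_variationOnFromTo [PseudoEMetricSpace F] {δ : ℝ → F} {s : Set ℝ} {a : ℝ}
    (ha : a ∈ s) (hδ : ContinuousOn δ s) (hbv : BoundedVariationOn δ s) :
    ContinuousOn (variationOnFromTo δ s a) s := by
  intro x hx
  have hleft := hbv.tendsto_eVariationOn_Icc_zero_left ((hδ x hx).mono inter_subset_left)
  have hright := hbv.tendsto_eVariationOn_Icc_zero_right x ((hδ x hx).mono inter_subset_left)
  have hsum := ((ENNReal.tendsto_toReal ENNReal.zero_ne_top).comp hleft).add
    ((ENNReal.tendsto_toReal ENNReal.zero_ne_top).comp hright)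
  simp only [ENNReal.toReal_zero, add_zero] at hsum
  refine tendsto_iff_dist_tendsto_zero.2
    (squeeze_zero' (Eventually.of_forall fun _ => dist_nonneg) ?_ hsum)
  filter_upwards [self_mem_nhdsWithin] with y hy
  rw [Real.dist_eq, ← variationOnFromTo.add hbv.locallyBoundedVariationOn ha hx hy,
    add_sub_cancel_left]
  rcases le_total x y with hxy | hyx
  · rw [variationOnFromTo.eq_of_le _ _ hxy, abs_of_nonneg ENNReal.toReal_nonneg]
    exact le_add_of_nonneg_left ENNReal.toReal_nonneg
  · rw [variationOnFromTo.eq_of_ge _ _ hyx, abs_neg, abs_of_nonneg ENNReal.toReal_nonneg]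
    exact le_add_of_nonneg_right ENNReal.toReal_nonneg

lemma lipschitzOnWith_one_of_hasUnitSpeedOn [PseudoEMetricSpace F] {γ : ℝ → F} {s : Set ℝ}
    (h : HasUnitSpeedOn γ s) : LipschitzOnWith 1 γ s := by
  have edist_le : ∀ x ∈ s, ∀ y ∈ s, x ≤ y → edist (γ x) (γ y) ≤ edist x y := by
    intro x hx y hy hxy
    calc edist (γ x) (γ y) ≤ eVariationOn γ (s ∩ Icc x y) :=
          eVariationOn.edist_le γ ⟨hx, le_rfl, hxy⟩ ⟨hy, hxy, le_rfl⟩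
      _ = edist x y := by
          rw [h hx hy, edist_dist, Real.dist_eq, abs_sub_comm, abs_of_nonneg (by linarith)]
          simp
  intro x hx y hy
  rw [ENNReal.coe_one, one_mul]
  rcases le_total x y with hxy | hyx
  · exact edist_le x hx y hy hxy
  · simpa only [edist_comm] using edist_le y hy x hx hyx

/-- `δ` on `[a, b]` is the curve `γ` on `[0, L]` precomposed with the continuous monotone
parameter change `s`. -/
structure IsReparametrization (δ : ℝ → F) (a b : ℝ) (γ : ℝ → F) (L : ℝ) (s : ℝ → ℝ) : Prop where
  le : a ≤ b
  continuousOn : ContinuousOn s (Icc a b)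
  monotoneOn : MonotoneOn s (Icc a b)
  map_left : s a = 0
  map_right : s b = L
  comp_eq : ∀ t ∈ Icc a b, γ (s t) = δ t

namespace IsReparametrization

variable {δ γ : ℝ → F} {a b L : ℝ} {s : ℝ → ℝ}

lemma mapsTo (h : IsReparametrization δ a b γ L s) : MapsTo s (Icc a b) (Icc 0 L) := fun _ ht =>
  ⟨h.map_left ▸ h.monotoneOn (left_mem_Icc.2 h.le) ht ht.1,
    h.map_right ▸ h.monotoneOn ht (right_mem_Icc.2 h.le) ht.2⟩

lemma image_Icc (h : IsReparametrization δ a b γ L s) : s '' Icc a b = Icc 0 L :=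
  h.mapsTo.image_subset.antisymm <| by
    simpa only [h.map_left, h.map_right] using intermediate_value_Icc h.le h.continuousOn

lemma image_eq (h : IsReparametrization δ a b γ L s) : γ '' Icc 0 L = δ '' Icc a b := by
  rw [← h.image_Icc, image_image]
  exact image_congr h.comp_eq

lemma injOn_Ico (h : IsReparametrization δ a b γ L s) (hδ : InjOn δ (Ico a b)) :
    InjOn γ (Ico 0 L) := by
  have lt_right : ∀ t ∈ Icc a b, s t < L → t < b := fun t ht hs =>
    lt_of_le_of_ne ht.2 (by rintro rfl; exact hs.ne h.map_right)
  intro x hx y hy hxy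
  obtain ⟨t, ht, rfl⟩ := h.image_Icc.symm ▸ Ico_subset_Icc_self hx
  obtain ⟨u, hu, rfl⟩ := h.image_Icc.symm ▸ Ico_subset_Icc_self hy
  rw [h.comp_eq t ht, h.comp_eq u hu] at hxy
  rw [hδ ⟨ht.1, lt_right t ht hx.2⟩ ⟨hu.1, lt_right u hu hy.2⟩ hxy]

lemma length_pos (h : IsReparametrization δ a b γ L s) (hab : a < b) (hδ : InjOn δ (Ico a b)) :
    0 < L := by
  by_contra! hL
  obtain ⟨c, hac, hcb⟩ := exists_between hab
  have hcI : c ∈ Icc a b := ⟨hac.le, hcb.le⟩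
  have hsc : s c = s a :=
    h.map_left.symm ▸ le_antisymm ((h.mapsTo hcI).2.trans hL) (h.mapsTo hcI).1
  have hδc : δ c = δ a := by
    rw [← h.comp_eq c hcI, ← h.comp_eq a (left_mem_Icc.2 hab.le), hsc]
  exact hac.ne' (hδ ⟨hac.le, hcb⟩ ⟨le_rfl, hab⟩ hδc)

end IsReparametrization

lemma exists_lipschitz_isReparametrization [EMetricSpace F] {δ : ℝ → F} {a b : ℝ} (hab : a ≤ b)
    (hδ : ContinuousOn δ (Icc a b)) (hbv : BoundedVariationOn δ (Icc a b)) :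
    ∃ (γ : ℝ → F) (L : ℝ) (s : ℝ → ℝ), LipschitzWith 1 γ ∧ IsReparametrization δ a b γ L s := by
  have ha : a ∈ Icc a b := left_mem_Icc.2 hab
  have hloc := hbv.locallyBoundedVariationOn
  set s := variationOnFromTo δ (Icc a b) a
  set γ₀ := naturalParameterization δ (Icc a b) a
  have h : IsReparametrization δ a b γ₀ (s b) s :=
    { le := hab
      continuousOn := continuousOn_variationOnFromTo ha hδ hbv
      monotoneOn := variationOnFromTo.monotoneOn hloc ha
      map_left := variationOnFromTo.self _ _ _
      map_right := rfl
      comp_eq := fun t ht => edist_eq_zero.1 (edist_naturalParameterization_eq_zero hloc ha ht) }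
  have hL : 0 ≤ s b := (h.mapsTo ha).1.trans (h.mapsTo ha).2
  have hlip : LipschitzOnWith 1 γ₀ (Icc 0 (s b)) :=
    h.image_Icc ▸ lipschitzOnWith_one_of_hasUnitSpeedOn
      (has_unit_speed_naturalParameterization δ hloc ha)
  refine ⟨fun x => γ₀ (projIcc 0 (s b) hL x), s b, s, ?_, { h with comp_eq := fun t ht => ?_ }⟩
  · have hcomp := hlip.to_restrict.comp (LipschitzWith.projIcc hL)
    rwa [mul_one] at hcomp
  · rw [projIcc_of_mem hL (h.mapsTo ht), h.comp_eq t ht]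

end Reparametrization

/-! ### Contour integrals along Lipschitz curves -/

lemma integral_eq_sub_of_lipschitzOnWith_of_ae_hasDerivAt {F : Type*} [NormedAddCommGroup F]
    [NormedSpace ℝ F] [CompleteSpace F] {G G' : ℝ → F} {u v C : ℝ} {K : NNReal}
    (hG : LipschitzOnWith K G (uIcc u v)) (hG' : IntervalIntegrable G' volume u v)
    (hC : ∀ x ∈ uIcc u v, ‖G' x‖ ≤ C) (hderiv : ∀ᵐ x, x ∈ uIcc u v → HasDerivAt G (G' x) x) :
    ∫ x in u..v, G' x = G v - G u := by
  have hC0 : 0 ≤ C := (norm_nonneg _).trans (hC u left_mem_uIcc)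
  have hInt : ∀ x ∈ uIcc u v, IntervalIntegrable G' volume u x := fun x hx =>
    hG'.mono_set (uIcc_subset_uIcc_left hx)
  have hprimitive : LipschitzOnWith C.toNNReal (fun x => ∫ t in u..x, G' t) (uIcc u v) := by
    refine LipschitzOnWith.of_dist_le_mul fun x hx y hy => ?_
    rw [dist_eq_norm, intervalIntegral.integral_interval_sub_left (hInt x hx) (hInt y hy),
      Real.coe_toNNReal _ hC0, Real.dist_eq]
    exact intervalIntegral.norm_integral_le_of_norm_le_const fun t ht =>
      hC t (uIcc_subset_uIcc hy hx (uIoc_subset_uIcc ht))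
  obtain ⟨c, hc⟩ := (hG.absolutelyContinuousOnInterval.sub
      hprimitive.absolutelyContinuousOnInterval).const_of_ae_hasDerivAt_zero (by
    filter_upwards [hderiv, hG'.ae_hasDerivAt_integral] with x hx hx' hmem
    simpa only [sub_self] using (hx hmem).sub (hx' hmem u left_mem_uIcc))
  have hu := hc u left_mem_uIcc
  have hv := hc v right_mem_uIcc
  simp only [Pi.sub_apply, intervalIntegral.integral_same, sub_zero] at hu hv
  rw [hu, ← hv, sub_sub_cancel]

/-- The contour integral `∫_γ h(z) dz` along a curve `γ` on `[0, L]`, as a Lebesgue integral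
against `γ'`; it is used for Lipschitz `γ`, whose derivative exists almost everywhere. -/
noncomputable def contourIntegral (γ : ℝ → ℂ) (L : ℝ) (h : ℂ → ℂ) : ℂ :=
  ∫ x in (0 : ℝ)..L, h (γ x) * deriv γ x

section ContourIntegral

variable {γ : ℝ → ℂ} {L : ℝ} {h k : ℂ → ℂ}

lemma norm_deriv_le_one (hγ : LipschitzWith 1 γ) (x : ℝ) : ‖deriv γ x‖ ≤ 1 := by
  simpa using norm_deriv_le_of_lipschitz hγ (x₀ := x)

lemma intervalIntegrable_deriv (hγ : LipschitzWith 1 γ) (u v : ℝ) :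
    IntervalIntegrable (deriv γ) volume u v :=
  (intervalIntegrable_const (c := (1 : ℝ))).mono_fun (measurable_deriv γ).aestronglyMeasurable
    (ae_of_all _ fun x => by simpa using norm_deriv_le_one hγ x)

lemma norm_mul_deriv_le (hγ : LipschitzWith 1 γ) (w : ℂ) (x : ℝ) :
    ‖w * deriv γ x‖ ≤ ‖w‖ := by
  rw [norm_mul]
  exact mul_le_of_le_one_right (norm_nonneg w) (norm_deriv_le_one hγ x)

lemma integral_deriv_eq_sub_of_lipschitzWith (hγ : LipschitzWith 1 γ) (u v : ℝ) :
    ∫ x in u..v, deriv γ x = γ v - γ u :=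
  integral_eq_sub_of_lipschitzOnWith_of_ae_hasDerivAt hγ.lipschitzOnWith
    (intervalIntegrable_deriv hγ u v) (fun x _ => norm_deriv_le_one hγ x) <| by
      filter_upwards [hγ.ae_differentiableAt (μ := volume)] with x hx _ using hx.hasDerivAt

lemma isCompact_image_Icc (hγ : LipschitzWith 1 γ) : IsCompact (γ '' Icc 0 L) :=
  isCompact_Icc.image hγ.continuous

lemma continuousOn_comp_Icc (hγ : LipschitzWith 1 γ) (hh : ContinuousOn h (γ '' Icc 0 L)) :
    ContinuousOn (fun x => h (γ x)) (Icc 0 L) :=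
  hh.comp hγ.continuous.continuousOn (mapsTo_image _ _)

lemma intervalIntegrable_comp_mul_deriv (hL : 0 ≤ L) (hγ : LipschitzWith 1 γ)
    (hh : ContinuousOn h (γ '' Icc 0 L)) {u v : ℝ} (hu : u ∈ Icc 0 L) (hv : v ∈ Icc 0 L) :
    IntervalIntegrable (fun x => h (γ x) * deriv γ x) volume u v := by
  rw [← uIcc_of_le hL] at hu hv
  refine IntervalIntegrable.mono_set (a := 0) (b := L) ?_ (uIcc_subset_uIcc hu hv)
  refine (intervalIntegrable_deriv hγ 0 L).continuousOn_mul ?_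
  rw [uIcc_of_le hL]
  exact continuousOn_comp_Icc hγ hh

lemma norm_contourIntegral_le (hL : 0 ≤ L) (hγ : LipschitzWith 1 γ) {C : ℝ}
    (hC : ∀ z ∈ γ '' Icc 0 L, ‖h z‖ ≤ C) : ‖contourIntegral γ L h‖ ≤ C * L := by
  have hbound : ∀ x ∈ uIoc 0 L, ‖h (γ x) * deriv γ x‖ ≤ C := fun x hx => by
    rw [uIoc_of_le hL] at hx
    exact (norm_mul_deriv_le hγ _ x).trans (hC _ (mem_image_of_mem γ (Ioc_subset_Icc_self hx)))
  simpa only [contourIntegral, sub_zero, abs_of_nonneg hL] using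
    intervalIntegral.norm_integral_le_of_norm_le_const hbound

lemma contourIntegral_congr (hL : 0 ≤ L) (hhk : EqOn h k (γ '' Icc 0 L)) :
    contourIntegral γ L h = contourIntegral γ L k := by
  refine intervalIntegral.integral_congr fun x hx => ?_
  rw [uIcc_of_le hL] at hx
  simp only [hhk (mem_image_of_mem γ hx)]

lemma contourIntegral_const_mul (c : ℂ) (h : ℂ → ℂ) :
    contourIntegral γ L (fun z => c * h z) = c * contourIntegral γ L h := by
  simp only [contourIntegral, ← intervalIntegral.integral_const_mul, mul_assoc]

lemma contourIntegral_sub (hL : 0 ≤ L) (hγ : LipschitzWith 1 γ)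
    (hh : ContinuousOn h (γ '' Icc 0 L)) (hk : ContinuousOn k (γ '' Icc 0 L)) :
    contourIntegral γ L (fun z => h z - k z) = contourIntegral γ L h - contourIntegral γ L k := by
  have h0 : (0 : ℝ) ∈ Icc 0 L := left_mem_Icc.2 hL
  have hL' : L ∈ Icc 0 L := right_mem_Icc.2 hL
  simp only [contourIntegral, sub_mul]
  exact intervalIntegral.integral_sub (intervalIntegrable_comp_mul_deriv hL hγ hh h0 hL')
    (intervalIntegrable_comp_mul_deriv hL hγ hk h0 hL')

lemma exists_lipschitzOnWith_comp (hγ : LipschitzWith 1 γ) {F : ℂ → ℂ} {W : Set ℂ} (hW : IsOpen W)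
    (hsub : γ '' Icc 0 L ⊆ W) (hF : DifferentiableOn ℂ F W) :
    ∃ K, LipschitzOnWith K (F ∘ γ) (Icc 0 L) := by
  refine LocallyLipschitzOn.exists_lipschitzOnWith_of_compact isCompact_Icc fun x hx => ?_
  have hF_at : ContDiffAt ℂ 1 F (γ x) :=
    (hF.contDiffOn hW).contDiffAt (hW.mem_nhds (hsub (mem_image_of_mem γ hx)))
  obtain ⟨K, s, hs, hK⟩ := hF_at.exists_lipschitzOnWith
  exact ⟨K * 1, γ ⁻¹' s, mem_nhdsWithin_of_mem_nhds (hγ.continuous.continuousAt hs),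
    hK.comp hγ.lipschitzOnWith (mapsTo_preimage _ _)⟩

end ContourIntegral

/-- A closed curve on `[0, L]`, parametrized with speed at most one. -/
structure IsLipschitzLoop (γ : ℝ → ℂ) (L : ℝ) : Prop where
  length_pos : 0 < L
  lipschitz : LipschitzWith 1 γ
  closed : γ 0 = γ L

lemma IsLipschitzLoop.contourIntegral_deriv_eq_zero {γ : ℝ → ℂ} {L : ℝ} (hγ : IsLipschitzLoop γ L)
    {F F' : ℂ → ℂ} {W : Set ℂ} (hW : IsOpen W) (hsub : γ '' Icc 0 L ⊆ W)
    (hF : ∀ z ∈ W, HasDerivAt F (F' z) z) : contourIntegral γ L F' = 0 := by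
  have hL := hγ.length_pos.le
  have hFd : DifferentiableOn ℂ F W := fun z hz =>
    (hF z hz).differentiableAt.differentiableWithinAt
  have hF'c : ContinuousOn F' (γ '' Icc 0 L) :=
    ((hFd.deriv hW).continuousOn.congr fun z hz => (hF z hz).deriv.symm).mono hsub
  obtain ⟨C, hC⟩ := (isCompact_image_Icc hγ.lipschitz).exists_bound_of_continuousOn hF'c
  obtain ⟨K, hK⟩ := exists_lipschitzOnWith_comp hγ.lipschitz hW hsub hFd
  have hftc : contourIntegral γ L F' = (F ∘ γ) L - (F ∘ γ) 0 := by
    rw [← uIcc_of_le hL] at hsub hC hK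
    refine integral_eq_sub_of_lipschitzOnWith_of_ae_hasDerivAt hK
      (intervalIntegrable_comp_mul_deriv hL hγ.lipschitz hF'c (left_mem_Icc.2 hL)
        (right_mem_Icc.2 hL))
      (fun x hx => (norm_mul_deriv_le hγ.lipschitz _ x).trans (hC _ (mem_image_of_mem γ hx))) ?_
    filter_upwards [hγ.lipschitz.ae_differentiableAt (μ := volume)] with x hx hmem
    exact (hF (γ x) (hsub (mem_image_of_mem γ hmem))).comp_of_eq x hx.hasDerivAt rfl
  rw [hftc, Function.comp_apply, Function.comp_apply, hγ.closed, sub_self]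

/-! ### Riemann–Stieltjes integrals as contour integrals -/

lemma sum_integral_adjacent_fin {F : Type*} [NormedAddCommGroup F] [NormedSpace ℝ F] {h : ℝ → F}
    {n : ℕ} (u : Fin (n + 1) → ℝ) (hInt : ∀ i j, IntervalIntegrable h volume (u i) (u j)) :
    ∑ i : Fin n, ∫ x in (u i.castSucc)..(u i.succ), h x = ∫ x in (u 0)..(u (Fin.last n)), h x := by
  induction n with
  | zero => simp
  | succ n ih =>
    rw [Fin.sum_univ_castSucc]
    have hsum := ih (fun i => u i.castSucc) fun i j => hInt i.castSucc j.castSucc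
    simp only [Fin.succ_castSucc, Fin.succ_last, Fin.castSucc_zero] at hsum ⊢
    rw [hsum, intervalIntegral.integral_add_adjacent_intervals (hInt _ _) (hInt _ _)]

lemma norm_mul_sub_sub_integral_mul_deriv_le {γ : ℝ → ℂ} (hγ : LipschitzWith 1 γ) {u v e : ℝ}
    (huv : u ≤ v) {h : ℝ → ℂ} (hInt : IntervalIntegrable (fun x => h x * deriv γ x) volume u v)
    {c : ℂ} (hc : ∀ x ∈ Icc u v, ‖c - h x‖ ≤ e) :
    ‖c * (γ v - γ u) - ∫ x in u..v, h x * deriv γ x‖ ≤ ∫ _ in u..v, e := by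
  rw [← integral_deriv_eq_sub_of_lipschitzWith hγ, ← intervalIntegral.integral_const_mul,
    ← intervalIntegral.integral_sub ((intervalIntegrable_deriv hγ u v).const_mul c) hInt]
  refine intervalIntegral.norm_integral_le_of_norm_le huv (ae_of_all _ fun x hx => ?_)
    intervalIntegrable_const
  rw [← sub_mul]
  exact (norm_mul_deriv_le hγ _ x).trans (hc x (Ioc_subset_Icc_self hx))

section RSIntegral

variable {δ γ : ℝ → ℂ} {a b L : ℝ} {s : ℝ → ℝ} {g : ℂ → ℂ}

lemma IsReparametrization.exists_mesh_norm_sub_lt (hs : IsReparametrization δ a b γ L s)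
    (hγ : LipschitzWith 1 γ) (hg : ContinuousOn g (γ '' Icc 0 L)) {e : ℝ} (he : 0 < e) :
    ∃ d > 0, ∀ u ∈ Icc a b, ∀ v ∈ Icc a b, v - u < d → ∀ ξ ∈ Icc u v, ∀ x ∈ Icc (s u) (s v),
      ‖g (δ ξ) - g (γ x)‖ < e := by
  obtain ⟨η, hη, hg_unif⟩ := Metric.uniformContinuousOn_iff.1
    (isCompact_Icc.uniformContinuousOn_of_continuous (continuousOn_comp_Icc hγ hg)) e he
  obtain ⟨d, hd, hs_unif⟩ := Metric.uniformContinuousOn_iff.1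
    (isCompact_Icc.uniformContinuousOn_of_continuous hs.continuousOn) η hη
  refine ⟨d, hd, fun u hu v hv huv ξ hξ x hx => ?_⟩
  have hξI : ξ ∈ Icc a b := ⟨hu.1.trans hξ.1, hξ.2.trans hv.2⟩
  have hsuv : dist (s u) (s v) < η := hs_unif u hu v hv <| by
    rwa [dist_comm, Real.dist_eq, abs_of_nonneg (sub_nonneg.2 (hξ.1.trans hξ.2))]
  have hsξ : s ξ ∈ Icc (s u) (s v) :=
    ⟨hs.monotoneOn hu hξI hξ.1, hs.monotoneOn hξI hv hξ.2⟩
  rw [← hs.comp_eq ξ hξI, ← dist_eq_norm]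
  exact hg_unif _ (hs.mapsTo hξI) _
    ⟨(hs.mapsTo hu).1.trans hx.1, hx.2.trans (hs.mapsTo hv).2⟩
    ((Real.dist_le_of_mem_Icc hsξ hx).trans_lt (by
      rwa [dist_comm, Real.dist_eq, abs_of_nonneg (sub_nonneg.2 (hx.1.trans hx.2))] at hsuv))

lemma IsReparametrization.isRSIntegral_contourIntegral (hs : IsReparametrization δ a b γ L s)
    (hγ : LipschitzWith 1 γ) (hg : ContinuousOn g (γ '' Icc 0 L)) :
    IsRSIntegral g δ a b (contourIntegral γ L g) := by
  intro ε hε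
  have hL : 0 ≤ L := (hs.mapsTo (left_mem_Icc.2 hs.le)).1.trans (hs.mapsTo (left_mem_Icc.2 hs.le)).2
  obtain ⟨d, hd, hclose⟩ := hs.exists_mesh_norm_sub_lt hγ hg (e := ε / (L + 1)) (by positivity)
  refine ⟨d, hd, fun n t ξ ht ht0 htn hξ hmesh => ?_⟩
  have htI : ∀ i, t i ∈ Icc a b := fun i => ⟨ht0 ▸ ht (Fin.zero_le i), htn ▸ ht (Fin.le_last i)⟩
  have hInt : ∀ i j, IntervalIntegrable (fun x => g (γ x) * deriv γ x) volume (s (t i)) (s (t j)) :=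
    fun i j => intervalIntegrable_comp_mul_deriv hL hγ hg (hs.mapsTo (htI i)) (hs.mapsTo (htI j))
  have hsum := sum_integral_adjacent_fin (fun i => s (t i)) hInt
  have hsum_const := sum_integral_adjacent_fin (fun i => s (t i)) (h := fun _ => ε / (L + 1))
    fun _ _ => intervalIntegrable_const
  simp only [ht0, htn, hs.map_left, hs.map_right] at hsum hsum_const
  have hterm : ∀ i : Fin n, ‖g (δ (ξ i)) * (δ (t i.succ) - δ (t i.castSucc)) -
      ∫ x in (s (t i.castSucc))..(s (t i.succ)), g (γ x) * deriv γ x‖ ≤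
      ∫ _ in (s (t i.castSucc))..(s (t i.succ)), ε / (L + 1) := fun i => by
    rw [← hs.comp_eq _ (htI i.succ), ← hs.comp_eq _ (htI i.castSucc)]
    exact norm_mul_sub_sub_integral_mul_deriv_le hγ
      (hs.monotoneOn (htI _) (htI _) (ht (Fin.castSucc_le_succ i))) (hInt _ _)
      fun x hx => (hclose _ (htI _) _ (htI _) (hmesh i) _ (hξ i) x hx).le
  rw [contourIntegral, ← hsum, ← Finset.sum_sub_distrib]
  calc _ ≤ ∑ i : Fin n, ∫ _ in (s (t i.castSucc))..(s (t i.succ)), ε / (L + 1) :=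
        norm_sum_le_of_le _ fun i _ => hterm i
    _ = ε * (L / (L + 1)) := by
        rw [hsum_const, intervalIntegral.integral_const, smul_eq_mul]
        ring
    _ < ε := mul_lt_of_lt_one_right hε ((div_lt_one (by linarith)).2 (by linarith))

end RSIntegral

lemma exists_uniform_partition {a b d : ℝ} (hab : a ≤ b) (hd : 0 < d) :
    ∃ (n : ℕ) (t : Fin (n + 1) → ℝ), Monotone t ∧ t 0 = a ∧ t (Fin.last n) = b ∧
      ∀ i : Fin n, t i.succ - t i.castSucc < d := by
  obtain ⟨n, hn⟩ := exists_nat_gt ((b - a) / d)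
  have hn0 : (0 : ℝ) < n := (div_nonneg (sub_nonneg.2 hab) hd.le).trans_lt hn
  refine ⟨n, fun i => a + (b - a) * ((i : ℕ) / n), fun i j hij => ?_, by simp, ?_, fun i => ?_⟩
  · have : ((i : ℕ) : ℝ) ≤ (j : ℕ) := by exact_mod_cast hij
    have := sub_nonneg.2 hab
    dsimp only
    gcongr
  · simp [hn0.ne']
  · have hstep : (a + (b - a) * ((i.succ : ℕ) / n)) - (a + (b - a) * ((i.castSucc : ℕ) / n)) =
        (b - a) / n := by
      rw [Fin.val_succ, Fin.val_castSucc]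
      push_cast
      ring
    rw [hstep, div_lt_comm₀ hn0 hd]
    exact hn

lemma IsRSIntegral.unique {g : ℂ → ℂ} {δ : ℝ → ℂ} {a b : ℝ} (hab : a ≤ b) {I J : ℂ}
    (hI : IsRSIntegral g δ a b I) (hJ : IsRSIntegral g δ a b J) : I = J := by
  refine eq_of_forall_dist_le fun ε hε => ?_
  obtain ⟨d, hd, hId⟩ := hI _ (half_pos hε)
  obtain ⟨d', hd', hJd⟩ := hJ _ (half_pos hε)
  obtain ⟨n, t, ht, ht0, htn, hmesh⟩ := exists_uniform_partition hab (lt_min hd hd')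
  have htag : ∀ i : Fin n, t i.castSucc ∈ Icc (t i.castSucc) (t i.succ) := fun i =>
    ⟨le_rfl, ht (Fin.castSucc_le_succ i)⟩
  have hSI := hId n t _ ht ht0 htn htag fun i => (hmesh i).trans_le (min_le_left _ _)
  have hSJ := hJd n t _ ht ht0 htn htag fun i => (hmesh i).trans_le (min_le_right _ _)
  rw [← dist_eq_norm] at hSI hSJ
  linarith [dist_triangle_left I J (∑ i : Fin n,
    g (δ (t i.castSucc)) * (δ (t i.succ) - δ (t i.castSucc)))]

lemma IsReparametrization.isRSIntegral_zero_iff {δ γ : ℝ → ℂ} {a b L : ℝ} {s : ℝ → ℝ} {g : ℂ → ℂ}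
    (hs : IsReparametrization δ a b γ L s) (hγ : LipschitzWith 1 γ)
    (hg : ContinuousOn g (γ '' Icc 0 L)) :
    IsRSIntegral g δ a b 0 ↔ contourIntegral γ L g = 0 := by
  have hrs := hs.isRSIntegral_contourIntegral hγ hg
  exact ⟨fun h => hrs.unique hs.le h, fun h => h ▸ hrs⟩

/-! ### The Cauchy–Riemann operator and the Cauchy–Pompeiu formula -/

/-- Twice the Wirtinger derivative `∂φ/∂z̄`, that is `∂φ/∂x + i ∂φ/∂y`. -/
noncomputable def dbar (φ : ℂ → ℂ) (z : ℂ) : ℂ :=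
  fderiv ℝ φ z 1 + Complex.I * fderiv ℝ φ z Complex.I

section Dbar

variable {φ ψ : ℂ → ℂ} {z : ℂ}

lemma continuous_dbar (hφ : ContDiff ℝ 1 φ) : Continuous (dbar φ) := by
  have := hφ.continuous_fderiv one_ne_zero
  unfold dbar
  fun_prop

lemma tsupport_dbar_subset_tsupport_fderiv (φ : ℂ → ℂ) :
    tsupport (dbar φ) ⊆ tsupport (fderiv ℝ φ) := by
  refine closure_mono fun z hz => ?_
  contrapose! hz
  rw [Function.notMem_support] at hz ⊢
  simp [dbar, hz]

lemma tsupport_dbar_subset (φ : ℂ → ℂ) : tsupport (dbar φ) ⊆ tsupport φ :=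
  (tsupport_dbar_subset_tsupport_fderiv φ).trans (tsupport_fderiv_subset ℝ)

lemma hasCompactSupport_dbar (hφ : HasCompactSupport φ) : HasCompactSupport (dbar φ) :=
  hφ.of_isClosed_subset (isClosed_tsupport _) (tsupport_dbar_subset φ)

lemma integrable_dbar (hφ : ContDiff ℝ 1 φ) (hsupp : HasCompactSupport φ) :
    Integrable (dbar φ) :=
  (continuous_dbar hφ).integrable_of_hasCompactSupport (hasCompactSupport_dbar hsupp)

lemma dbar_congr (h : φ =ᶠ[𝓝 z] ψ) : dbar φ z = dbar ψ z := by
  rw [dbar, dbar, h.fderiv_eq]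

lemma dbar_mul (hφ : DifferentiableAt ℝ φ z) (hψ : DifferentiableAt ℝ ψ z) :
    dbar (fun z => φ z * ψ z) z = dbar φ z * ψ z + φ z * dbar ψ z := by
  simp only [dbar, fderiv_fun_mul hφ hψ, add_apply, smul_apply, smul_eq_mul]
  ring

lemma dbar_eq_zero (hφ : DifferentiableAt ℂ φ z) : dbar φ z = 0 := by
  have hI : fderiv ℂ φ z Complex.I = Complex.I * fderiv ℂ φ z 1 := by
    rw [← smul_eq_mul, ← map_smul, smul_eq_mul, mul_one]
  rw [dbar, hφ.fderiv_restrictScalars ℝ]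
  simp only [ContinuousLinearMap.coe_restrictScalars', hI]
  linear_combination (fderiv ℂ φ z 1) * Complex.I_sq

lemma dbar_mul_conj (φ : ℂ → ℂ) (z u : ℂ) :
    dbar φ z * starRingEnd ℂ u =
      fderiv ℝ φ z u + Complex.I * fderiv ℝ φ z (Complex.I * u) := by
  have hu : fderiv ℝ φ z u = u.re * fderiv ℝ φ z 1 + u.im * fderiv ℝ φ z Complex.I := by
    conv_lhs => rw [show u = u.re • (1 : ℂ) + u.im • Complex.I by simp]
    rw [map_add, map_smul, map_smul, Complex.real_smul, Complex.real_smul]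
  have hIu : fderiv ℝ φ z (Complex.I * u) =
      -u.im * fderiv ℝ φ z 1 + u.re * fderiv ℝ φ z Complex.I := by
    conv_lhs => rw [show Complex.I * u = (-u.im) • (1 : ℂ) + u.re • Complex.I by
      apply Complex.ext <;> simp]
    rw [map_add, map_smul, map_smul, Complex.real_smul, Complex.real_smul, Complex.ofReal_neg]
  have hconj : starRingEnd ℂ u = u.re - u.im * Complex.I := by apply Complex.ext <;> simp
  rw [hu, hIu, dbar, hconj]
  linear_combination -(u.im * fderiv ℝ φ z Complex.I) * Complex.I_sq

lemma integral_fderiv_apply_eq_zero (hφ : ContDiff ℝ 1 φ) (hsupp : HasCompactSupport φ) (v : ℂ) :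
    ∫ z, fderiv ℝ φ z v = 0 := by
  have hInt : Integrable fun z => fderiv ℝ φ z v :=
    ((hφ.continuous_fderiv one_ne_zero).clm_apply continuous_const).integrable_of_hasCompactSupport
      (hsupp.fderiv_apply ℝ v)
  have hparts := integral_mul_fderiv_eq_neg_fderiv_mul_of_integrable (μ := volume) (𝕜 := ℂ)
    (f := fun _ : ℂ => (1 : ℂ)) (g := φ) (v := v) (by simp) (by simpa using hInt)
    (by simpa using hφ.continuous.integrable_of_hasCompactSupport hsupp)
    (fun _ _ => differentiableAt_const _) (fun _ _ => hφ.differentiable one_ne_zero _)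
  simpa using hparts

lemma integral_dbar_eq_zero (hφ : ContDiff ℝ 1 φ) (hsupp : HasCompactSupport φ) :
    ∫ z, dbar φ z = 0 := by
  have hInt : ∀ v, Integrable fun z => fderiv ℝ φ z v := fun v =>
    ((hφ.continuous_fderiv one_ne_zero).clm_apply continuous_const).integrable_of_hasCompactSupport
      (hsupp.fderiv_apply ℝ v)
  simp only [dbar]
  rw [integral_add (hInt _) ((hInt _).const_mul _), integral_const_mul,
    integral_fderiv_apply_eq_zero hφ hsupp, integral_fderiv_apply_eq_zero hφ hsupp, mul_zero,
    add_zero]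

end Dbar

section CauchyPompeiu

variable {φ : ℂ → ℂ} {w : ℂ} {R : ℝ}

lemma integral_radial_fderiv (hφ : ContDiff ℝ 1 φ) {θ : ℝ} (hR : φ (circleMap w R θ) = 0) :
    ∫ r in (0 : ℝ)..R, fderiv ℝ φ (circleMap w r θ) (circleMap 0 1 θ) = -φ w := by
  have := hφ.continuous_fderiv one_ne_zero
  have hray : ∀ r : ℝ, HasDerivAt (fun r : ℝ => circleMap w r θ) (circleMap 0 1 θ) r := fun r => by
    simpa [circleMap] using
      ((hasDerivAt_id r).ofReal_comp.mul_const (Complex.exp (θ * Complex.I))).const_add w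
  rw [intervalIntegral.integral_eq_sub_of_hasDerivAt (f := fun r : ℝ => φ (circleMap w r θ))]
  · simp [hR]
  · exact fun r _ =>
      (hφ.differentiable one_ne_zero _).hasFDerivAt.comp_hasDerivAt r (hray r)
  · apply Continuous.intervalIntegrable
    simp only [circleMap]
    fun_prop

lemma integral_angular_fderiv (hφ : ContDiff ℝ 1 φ) (w : ℂ) {r : ℝ} (hr : r ≠ 0) :
    ∫ θ in -Real.pi..Real.pi, fderiv ℝ φ (circleMap w r θ) (Complex.I * circleMap 0 1 θ) = 0 := by
  have := hφ.continuous_fderiv one_ne_zero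
  have hderiv : ∀ θ : ℝ, HasDerivAt (fun θ => φ (circleMap w r θ))
      (r * fderiv ℝ φ (circleMap w r θ) (Complex.I * circleMap 0 1 θ)) θ := fun θ => by
    have hspeed : r • (Complex.I * circleMap 0 1 θ) = circleMap 0 r θ * Complex.I := by
      simp only [circleMap, Complex.real_smul]
      push_cast
      ring
    rw [← Complex.real_smul, ← map_smul, hspeed]
    exact (hφ.differentiable one_ne_zero _).hasFDerivAt.comp_hasDerivAt θ
      (hasDerivAt_circleMap w r θ)
  have hperiod : circleMap w r Real.pi = circleMap w r (-Real.pi) := by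
    rw [← periodic_circleMap w r (-Real.pi)]
    ring_nf
  have hzero : ∫ θ in -Real.pi..Real.pi,
      (r * fderiv ℝ φ (circleMap w r θ) (Complex.I * circleMap 0 1 θ) : ℂ) = 0 := by
    rw [intervalIntegral.integral_eq_sub_of_hasDerivAt fun θ _ => hderiv θ, hperiod, sub_self]
    apply Continuous.intervalIntegrable
    simp only [circleMap]
    fun_prop
  rw [intervalIntegral.integral_const_mul] at hzero
  exact (mul_eq_zero.1 hzero).resolve_left (by exact_mod_cast hr)

lemma integral_dbar_div_sub_eq_polar (φ : ℂ → ℂ) (w : ℂ) :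
    ∫ z, dbar φ z / (z - w) = ∫ p in Ioi (0 : ℝ) ×ˢ Ioo (-Real.pi) Real.pi,
      (fderiv ℝ φ (circleMap w p.1 p.2) (circleMap 0 1 p.2) +
        Complex.I * fderiv ℝ φ (circleMap w p.1 p.2) (Complex.I * circleMap 0 1 p.2)) := by
  rw [← integral_add_right_eq_self _ w, ← Complex.integral_comp_polarCoord_symm, polarCoord_target]
  refine setIntegral_congr_fun (measurableSet_Ioi.prod measurableSet_Ioo) ?_
  rintro ⟨r, θ⟩ ⟨hr, -⟩
  have hr0 : (r : ℂ) ≠ 0 := by exact_mod_cast (mem_Ioi.1 hr).ne'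
  have hpolar : Complex.polarCoord.symm (r, θ) = r * circleMap 0 1 θ := by
    simp [Complex.polarCoord_symm_apply, circleMap, Complex.exp_mul_I]
  have hcircle : (r * circleMap 0 1 θ + w : ℂ) = circleMap w r θ := by
    simp only [circleMap]
    push_cast
    ring
  have hinv : (circleMap 0 1 θ)⁻¹ = starRingEnd ℂ (circleMap 0 1 θ) := by
    rw [Complex.inv_def, Complex.normSq_eq_norm_sq, norm_circleMap_zero]
    simp
  simp only [hpolar, add_sub_cancel_right, Complex.real_smul, ← dbar_mul_conj, ← hinv]
  rw [hcircle]
  field_simp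

lemma integral_polar_fderiv (hφ : ContDiff ℝ 1 φ) (hR0 : 0 < R)
    (hR : ∀ θ, φ (circleMap w R θ) = 0) :
    ∫ p in Ioc 0 R ×ˢ Ioo (-Real.pi) Real.pi,
      (fderiv ℝ φ (circleMap w p.1 p.2) (circleMap 0 1 p.2) +
        Complex.I * fderiv ℝ φ (circleMap w p.1 p.2) (Complex.I * circleMap 0 1 p.2)) =
      -(2 * Real.pi) * φ w := by
  have := hφ.continuous_fderiv one_ne_zero
  have hpi : -Real.pi ≤ Real.pi := neg_le_self Real.pi_pos.le
  have hInt : ∀ F : ℝ × ℝ → ℂ, Continuous F →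
      Integrable F ((volume.restrict (Ioc 0 R)).prod (volume.restrict (Ioo (-Real.pi) Real.pi))) :=
    fun F hF => by
      rw [Measure.prod_restrict]
      refine IntegrableOn.mono_set (t := Icc ((0 : ℝ), -Real.pi) (R, Real.pi))
        hF.integrableOn_Icc ?_
      rintro ⟨r, θ⟩ ⟨hr, hθ⟩
      exact ⟨⟨hr.1.le, hθ.1.le⟩, ⟨hr.2, hθ.2.le⟩⟩
  have hradial_int := hInt (fun p => fderiv ℝ φ (circleMap w p.1 p.2) (circleMap 0 1 p.2))
    (by simp only [circleMap]; fun_prop)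
  have hangular_int := hInt
    (fun p => fderiv ℝ φ (circleMap w p.1 p.2) (Complex.I * circleMap 0 1 p.2))
    (by simp only [circleMap]; fun_prop)
  have hradial : ∀ θ, ∫ r in Ioc 0 R, fderiv ℝ φ (circleMap w r θ) (circleMap 0 1 θ) = -φ w :=
    fun θ => by rw [← intervalIntegral.integral_of_le hR0.le, integral_radial_fderiv hφ (hR θ)]
  have hangular : ∀ r ∈ Ioc 0 R, ∫ θ in Ioo (-Real.pi) Real.pi,
      fderiv ℝ φ (circleMap w r θ) (Complex.I * circleMap 0 1 θ) = 0 := fun r hr => by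
    rw [← integral_Ioc_eq_integral_Ioo, ← intervalIntegral.integral_of_le hpi,
      integral_angular_fderiv hφ w hr.1.ne']
  rw [Measure.volume_eq_prod, ← Measure.prod_restrict,
    integral_add hradial_int (hangular_int.const_mul _), integral_const_mul,
    integral_prod_symm _ hradial_int, integral_prod _ hangular_int,
    setIntegral_congr_fun measurableSet_Ioc hangular]
  have hvol : volume.real (Ioo (-Real.pi) Real.pi) = 2 * Real.pi := by
    rw [Measure.real, Real.volume_Ioo, ENNReal.toReal_ofReal] <;> linarith [Real.pi_pos]
  simp [hradial, hvol]

theorem integral_dbar_div_sub (hφ : ContDiff ℝ 1 φ) (hsupp : HasCompactSupport φ) (w : ℂ) :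
    ∫ z, dbar φ z / (z - w) = -(2 * Real.pi) * φ w := by
  obtain ⟨R, hR0, hR⟩ := hsupp.isCompact.isBounded.subset_ball_lt 0 w
  have hout : ∀ r θ, R ≤ r → circleMap w r θ ∉ tsupport φ := fun r θ hr hmem => by
    have hball := hR hmem
    rw [Metric.mem_ball, dist_eq_norm, circleMap_sub_center, norm_circleMap_zero,
      abs_of_pos (hR0.trans_le hr)] at hball
    exact hball.not_ge hr
  rw [integral_dbar_div_sub_eq_polar, ← integral_polar_fderiv hφ hR0
    fun θ => image_eq_zero_of_notMem_tsupport (hout R θ le_rfl)]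
  refine setIntegral_eq_of_subset_of_forall_sdiff_eq_zero
    (measurableSet_Ioi.prod measurableSet_Ioo) (prod_mono Ioc_subset_Ioi_self le_rfl) ?_
  rintro ⟨r, θ⟩ ⟨⟨hr, hθ⟩, hnot⟩
  have hRr : R ≤ r := le_of_not_gt fun hlt => hnot ⟨⟨hr, hlt.le⟩, hθ⟩
  have hzero : fderiv ℝ φ (circleMap w r θ) = 0 :=
    image_eq_zero_of_notMem_tsupport fun hmem => hout r θ hRr (tsupport_fderiv_subset ℝ hmem)
  simp [hzero]

end CauchyPompeiu

/-! ### The Cauchy kernel along a curve -/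

lemma exists_integrable_inv_norm_le_add_one :
    ∃ k : ℂ → ℝ, Integrable k ∧ ∀ z, 0 ≤ k z ∧ ‖z‖⁻¹ ≤ k z + 1 := by
  refine ⟨fun z => (Iio (1 : ℝ)).indicator (fun t => t⁻¹) ‖z‖, ?_, fun z => ?_⟩
  · rw [integrable_fun_norm_addHaar volume (f := (Iio (1 : ℝ)).indicator fun t => t⁻¹),
      Complex.finrank_real_complex]
    have hconst : IntegrableOn (fun _ : ℝ => (1 : ℝ)) (Ioo 0 1) :=
      integrableOn_const (by simp) (by simp)
    rw [← integrable_indicator_iff measurableSet_Ioo] at hconst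
    refine (hconst.integrableOn (s := Ioi 0)).congr_fun (fun y hy => ?_) measurableSet_Ioi
    have hy0 : 0 < y := hy
    by_cases hy1 : y < 1
    · simp [indicator, hy0, hy1, hy0.ne']
    · simp [indicator, hy1]
  · by_cases hz : ‖z‖ < 1
    · simp [indicator, hz]
    · simpa [indicator, hz] using inv_le_one_of_one_le₀ (not_lt.1 hz)

lemma exists_integral_norm_div_sub_le {φ : ℂ → ℂ} {B : ℝ} (hB : ∀ z, ‖φ z‖ ≤ B)
    (hφ : Integrable φ) :
    ∃ C, ∀ w, Integrable (fun z => φ z / (z - w)) ∧ ∫ z, ‖φ z / (z - w)‖ ≤ C := by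
  obtain ⟨k, hk, hbound⟩ := exists_integrable_inv_norm_le_add_one
  have hle : ∀ w z, ‖φ z / (z - w)‖ ≤ B * k (z - w) + ‖φ z‖ := fun w z => by
    obtain ⟨hk0, hk1⟩ := hbound (z - w)
    calc ‖φ z / (z - w)‖ ≤ ‖φ z‖ * (k (z - w) + 1) := by
          rw [div_eq_mul_inv, norm_mul, norm_inv]
          gcongr
      _ = ‖φ z‖ * k (z - w) + ‖φ z‖ := by ring
      _ ≤ B * k (z - w) + ‖φ z‖ := by
          gcongr
          exact hB z
  have hdom : ∀ w, Integrable fun z => B * k (z - w) + ‖φ z‖ := fun w =>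
    ((hk.comp_sub_right w).const_mul B).add hφ.norm
  have hInt : ∀ w, Integrable fun z => φ z / (z - w) := fun w => by
    have hinv : Measurable fun z : ℂ => (z - w)⁻¹ := by fun_prop
    exact (hdom w).mono' (hφ.1.mul hinv.aestronglyMeasurable) (ae_of_all _ (hle w))
  refine ⟨B * (∫ z, k z) + ∫ z, ‖φ z‖, fun w => ⟨hInt w, ?_⟩⟩
  calc ∫ z, ‖φ z / (z - w)‖ ≤ ∫ z, (B * k (z - w) + ‖φ z‖) :=
        integral_mono (hInt w).norm (hdom w) (hle w)
    _ = B * (∫ z, k z) + ∫ z, ‖φ z‖ := by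
        rw [integral_add ((hk.comp_sub_right w).const_mul B) hφ.norm, integral_const_mul,
          integral_sub_right_eq_self k w]

lemma integrable_div_sub_of_hasCompactSupport {φ : ℂ → ℂ} (hφ : Continuous φ)
    (hsupp : HasCompactSupport φ) (w : ℂ) : Integrable fun z => φ z / (z - w) := by
  obtain ⟨B, hB⟩ := hsupp.exists_bound_of_continuous hφ
  obtain ⟨C, hC⟩ := exists_integral_norm_div_sub_le hB (hφ.integrable_of_hasCompactSupport hsupp)
  exact (hC w).1

/-- The Cauchy integral `∫_γ dζ / (ζ - z)`, that is `2πi` times the winding number of a loop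
`γ` around a point `z` off its trace. -/
noncomputable def windingIntegral (γ : ℝ → ℂ) (L : ℝ) (z : ℂ) : ℂ :=
  contourIntegral γ L fun ζ => 1 / (ζ - z)

section CauchyKernel

variable {γ : ℝ → ℂ} {L : ℝ} {φ : ℂ → ℂ}

lemma integrable_prod_div_sub_mul_deriv (hγ : LipschitzWith 1 γ) {B : ℝ}
    (hB : ∀ z, ‖φ z‖ ≤ B) (hi : Integrable φ) (hm : Measurable φ) :
    Integrable (fun q : ℝ × ℂ => φ q.2 / (q.2 - γ q.1) * deriv γ q.1)
      ((volume.restrict (Ioc 0 L)).prod volume) := by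
  have : Measurable γ := hγ.continuous.measurable
  have : Measurable (deriv γ) := measurable_deriv γ
  have hmeas : Measurable fun q : ℝ × ℂ => φ q.2 / (q.2 - γ q.1) * deriv γ q.1 := by fun_prop
  obtain ⟨C, hC⟩ := exists_integral_norm_div_sub_le hB hi
  rw [integrable_prod_iff hmeas.aestronglyMeasurable]
  refine ⟨ae_of_all _ fun x => (hC (γ x)).1.mul_const (deriv γ x), ?_⟩
  refine Measure.integrableOn_of_bounded (M := C) (by simp)
    hmeas.norm.stronglyMeasurable.integral_prod_right'.aestronglyMeasurable
    (ae_of_all _ fun x => ?_)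
  rw [Real.norm_of_nonneg (by positivity)]
  simp only [norm_mul]
  rw [integral_mul_const]
  exact (mul_le_of_le_one_right (by positivity) (norm_deriv_le_one hγ x)).trans (hC (γ x)).2

lemma contourIntegral_integral_div_sub (hL : 0 ≤ L) (hγ : LipschitzWith 1 γ) {B : ℝ}
    (hB : ∀ z, ‖φ z‖ ≤ B) (hi : Integrable φ) (hm : Measurable φ) :
    contourIntegral γ L (fun ζ => ∫ z, φ z / (z - ζ)) =
      -∫ z, φ z * windingIntegral γ L z := by
  have hswap := integral_integral_swap
    (f := fun (x : ℝ) (z : ℂ) => φ z / (z - γ x) * deriv γ x)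
    (integrable_prod_div_sub_mul_deriv (L := L) hγ hB hi hm)
  simp only [integral_mul_const] at hswap
  simp only [windingIntegral, contourIntegral, intervalIntegral.integral_of_le hL]
  rw [hswap, ← integral_neg]
  congr 1 with z
  rw [← integral_const_mul, ← integral_neg]
  congr 1 with x
  rw [← neg_sub z (γ x), one_div, inv_neg]
  ring

lemma two_pi_mul_contourIntegral (hL : 0 ≤ L) (hγ : LipschitzWith 1 γ) (hφ : ContDiff ℝ 1 φ)
    (hsupp : HasCompactSupport φ) :
    2 * Real.pi * contourIntegral γ L φ = ∫ z, dbar φ z * windingIntegral γ L z := by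
  have hc := continuous_dbar hφ
  obtain ⟨B, hB⟩ := (hasCompactSupport_dbar hsupp).exists_bound_of_continuous hc
  have hfubini :=
    contourIntegral_integral_div_sub hL hγ hB (integrable_dbar hφ hsupp) hc.measurable
  simp only [integral_dbar_div_sub hφ hsupp, contourIntegral_const_mul] at hfubini
  linear_combination -hfubini

end CauchyKernel

/-! ### Complements in the Riemann sphere -/

lemma closure_connectedComponentIn_compl_subset {X : Type*} [TopologicalSpace X]
    [LocallyConnectedSpace X] {K : Set X} (hK : IsClosed K) (x : X) :
    closure (connectedComponentIn Kᶜ x) ⊆ connectedComponentIn Kᶜ x ∪ K := by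
  intro y hy
  by_contra hnot
  rw [mem_union, not_or] at hnot
  have hyC : y ∈ connectedComponentIn Kᶜ y := mem_connectedComponentIn hnot.2
  obtain ⟨t, hty, htx⟩ :=
    mem_closure_iff.1 hy _ hK.isOpen_compl.connectedComponentIn hyC
  exact hnot.1 (connectedComponentIn_eq htx ▸ connectedComponentIn_eq hty ▸ hyC)

lemma interior_closure_connectedComponentIn_compl {X : Type*} [TopologicalSpace X]
    [LocallyConnectedSpace X] {K : Set X} (hK : IsClosed K) {x : X}
    (hfr : frontier (closure (connectedComponentIn Kᶜ x)) = K) :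
    interior (closure (connectedComponentIn Kᶜ x)) = connectedComponentIn Kᶜ x := by
  refine Subset.antisymm (fun z hz => ?_)
    (interior_maximal subset_closure hK.isOpen_compl.connectedComponentIn)
  refine (closure_connectedComponentIn_compl_subset hK x (interior_subset hz)).resolve_right ?_
  intro hzK
  rw [← hfr] at hzK
  exact hzK.2 hz

lemma isClosed_connectedComponentIn {X : Type*} [TopologicalSpace X] {s : Set X}
    (hs : IsClosed s) (x : X) : IsClosed (connectedComponentIn s x) := by
  by_cases hx : x ∈ s
  · rw [connectedComponentIn_eq_image hx]
    exact hs.isClosedEmbedding_subtypeVal.isClosedMap _ isClosed_connectedComponent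
  · rw [connectedComponentIn_eq_empty hx]
    exact isClosed_empty

lemma subset_of_frontier_subset_of_isPreconnected_compl {X : Type*} [TopologicalSpace X]
    {G W : Set X} (hG : IsPreconnected ((↑) '' G : Set (OnePoint X))ᶜ) (hW : IsOpen W)
    (hWc : IsCompact (closure W)) (hfr : frontier W ⊆ G) : W ⊆ G := by
  intro w hw
  by_contra hwG
  have hopen : IsOpen ((↑) '' W : Set (OnePoint X)) := OnePoint.isOpen_image_coe.2 hW
  have hopen' : IsOpen ((↑) '' closure W : Set (OnePoint X))ᶜ :=
    (OnePoint.isClosed_image_coe.2 ⟨isClosed_closure, hWc⟩).isOpen_compl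
  have hcover : ((↑) '' G : Set (OnePoint X))ᶜ ⊆ (↑) '' W ∪ ((↑) '' closure W)ᶜ := by
    intro t ht
    by_cases htW : t ∈ ((↑) '' closure W : Set (OnePoint X))
    · obtain ⟨z, hz, rfl⟩ := htW
      refine Or.inl (mem_image_of_mem _ (by_contra fun hzW => ht (mem_image_of_mem _ (hfr ?_))))
      rw [hW.frontier_eq]
      exact ⟨hz, hzW⟩
    · exact Or.inr htW
  obtain ⟨t, -, ⟨z, hz, rfl⟩, hzc⟩ := hG _ _ hopen hopen' hcover
    ⟨w, by simpa using hwG, mem_image_of_mem _ hw⟩ ⟨OnePoint.infty, by simp, by simp⟩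
  exact hzc (mem_image_of_mem _ (subset_closure hz))

/-- `E` is a hole of the domain `Ω`: it is disjoint from `Ω`, and filling it in leaves an open
set whose complement in the Riemann sphere is connected. -/
structure IsHole (Ω E : Set ℂ) : Prop where
  isOpen : IsOpen Ω
  isConnected : IsConnected Ω
  disjoint : Disjoint Ω E
  isOpen_union : IsOpen (Ω ∪ E)
  isPreconnected_compl : IsPreconnected ((↑) '' (Ω ∪ E) : Set (OnePoint ℂ))ᶜ

section IsHole

variable {Ω E : Set ℂ}

lemma isHole_of_connectedComponentIn {z₀ : ℂ} (hΩo : IsOpen Ω) (hΩc : IsConnected Ω)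
    (hcover : ((↑) '' Ω : Set (OnePoint ℂ))ᶜ =
      connectedComponentIn ((↑) '' Ω)ᶜ OnePoint.infty ∪ (↑) '' E)
    (hE : ((↑) '' E : Set (OnePoint ℂ)) = connectedComponentIn ((↑) '' Ω)ᶜ (z₀ : OnePoint ℂ)) :
    IsHole Ω E := by
  set V := connectedComponentIn ((↑) '' Ω : Set (OnePoint ℂ))ᶜ OnePoint.infty
  have hVE : Disjoint V ((↑) '' E) := by
    rw [disjoint_left]
    intro t htV htE
    have hinf : OnePoint.infty ∈ ((↑) '' E : Set (OnePoint ℂ)) := by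
      rw [hE] at htE ⊢
      rw [connectedComponentIn_eq htE, ← connectedComponentIn_eq htV]
      exact mem_connectedComponentIn (by simp)
    simp at hinf
  have hcompl : ((↑) '' (Ω ∪ E) : Set (OnePoint ℂ))ᶜ = V := by
    rw [image_union, compl_union, hcover, union_inter_distrib_right, inter_compl_self, union_empty,
      ← sdiff_eq, hVE.sdiff_eq_left]
  refine ⟨hΩo, hΩc, ?_, ?_, hcompl ▸ isPreconnected_connectedComponentIn⟩
  · rw [disjoint_left]
    intro z hzΩ hzE
    have hz : (z : OnePoint ℂ) ∈ ((↑) '' Ω : Set (OnePoint ℂ))ᶜ :=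
      hcover ▸ Or.inr (mem_image_of_mem _ hzE)
    exact hz (mem_image_of_mem _ hzΩ)
  · rw [← OnePoint.isOpen_image_coe, ← isClosed_compl_iff, hcompl]
    exact isClosed_connectedComponentIn (OnePoint.isOpen_image_coe.2 hΩo).isClosed_compl _

namespace IsHole

lemma isPreconnected_union (h : IsHole Ω E) (hE : IsPreconnected E) (hEc : IsClosed E)
    (hfr : (frontier E).Nonempty) : IsPreconnected (Ω ∪ E) := by
  obtain ⟨p, hp⟩ := hfr
  have hpE : p ∈ E := hEc.frontier_subset hp
  have hpΩ : p ∈ closure Ω := by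
    by_contra hpΩ
    refine hp.2 (mem_interior.2 ⟨(closure Ω)ᶜ ∩ (Ω ∪ E), ?_,
      isClosed_closure.isOpen_compl.inter h.isOpen_union, hpΩ, Or.inr hpE⟩)
    rintro y ⟨hy, hyΩ | hyE⟩
    · exact absurd (subset_closure hyΩ) hy
    · exact hyE
  have hinsert : IsPreconnected (insert p Ω) :=
    h.isConnected.isPreconnected.subset_closure (subset_insert _ _)
      (insert_subset hpΩ subset_closure)
  have hunion := hinsert.union p (mem_insert _ _) hpE hE
  rwa [insert_union, insert_eq_of_mem (mem_union_right Ω hpE)] at hunion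

lemma not_isBounded_connectedComponentIn_compl (h : IsHole Ω E) (hE : IsCompact E) {z : ℂ}
    (hz : z ∉ E) : ¬ Bornology.IsBounded (connectedComponentIn Eᶜ z) := by
  intro hbdd
  set W := connectedComponentIn Eᶜ z
  have hWo : IsOpen W := hE.isClosed.isOpen_compl.connectedComponentIn
  have hWcl : closure W ⊆ W ∪ E := closure_connectedComponentIn_compl_subset hE.isClosed z
  have hWfr : frontier W ⊆ Ω ∪ E := by
    rw [hWo.frontier_eq]
    exact fun y hy => Or.inr ((hWcl hy.1).resolve_left hy.2)
  have hWΩ : W ⊆ Ω := fun y hy =>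
    (subset_of_frontier_subset_of_isPreconnected_compl h.isPreconnected_compl hWo
      hbdd.isCompact_closure hWfr hy).resolve_right (connectedComponentIn_subset _ _ hy)
  have hzW : z ∈ W := mem_connectedComponentIn hz
  have hΩW : Ω = W := Subset.antisymm (h.isConnected.isPreconnected.subset_connectedComponentIn
    (hWΩ hzW) fun y hy => disjoint_left.1 h.disjoint hy) hWΩ
  have hclosed : IsClosed (Ω ∪ E) := by
    rw [← closure_subset_iff_isClosed, closure_union, hE.isClosed.closure_eq, hΩW]
    exact union_subset hWcl subset_union_right
  have huniv : Ω ∪ E = univ :=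
    IsClopen.eq_univ ⟨hclosed, h.isOpen_union⟩ ⟨z, Or.inl (hWΩ hzW)⟩
  exact NormedSpace.unbounded_univ ℝ ℂ (huniv ▸ hΩW.symm ▸ hbdd.union hE.isBounded)

end IsHole

end IsHole

/-! ### Polynomial approximation of Cauchy kernels -/

section PolynomialApproximation

variable {K : Set ℂ} {z : ℂ}

-- The inverse of `z - X` lies in the closed algebra generated by the polynomials because passing
-- to a closed subalgebra can only fill bounded components of the complement of the spectrum.
lemma one_div_sub_mem_closure_polynomialFunctions [CompactSpace K]
    (hz : z ∉ K) (hc : ¬ Bornology.IsBounded (connectedComponentIn Kᶜ z)) {g : C(K, ℂ)}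
    (hg : ∀ ζ : K, g ζ = 1 / ((ζ : ℂ) - z)) :
    g ∈ (polynomialFunctions K).topologicalClosure := by
  set S := (polynomialFunctions K).topologicalClosure
  have : IsClosed (S : Set C(K, ℂ)) := Subalgebra.isClosed_topologicalClosure _
  let ι : C(K, ℂ) := Polynomial.toContinuousMapOnAlgHom K X
  have hιS : ι ∈ S := (polynomialFunctions K).le_topologicalClosure ⟨X, by simp, rfl⟩
  have hι : ∀ ζ : K, ι ζ = ζ := fun ζ => by simp [ι]
  have hspec : spectrum ℂ ι = K := by
    rw [ContinuousMap.spectrum_eq_range, funext hι, Subtype.range_coe]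
  have hzspec : z ∉ spectrum ℂ (⟨ι, hιS⟩ : S) := fun h =>
    hc (by simpa only [hspec] using
      Subalgebra.spectrum_isBounded_connectedComponentIn S (⟨ι, hιS⟩ : S) h)
  obtain ⟨u, hu⟩ := spectrum.notMem_iff.1 hzspec
  have hinv : ((u : S) : C(K, ℂ)) * ((↑u⁻¹ : S) : C(K, ℂ)) = 1 :=
    congrArg Subtype.val u.mul_inv
  have hg_eq : g = -((↑u⁻¹ : S) : C(K, ℂ)) := by
    ext ζ
    have huζ : ((u : S) : C(K, ℂ)) ζ = z - ζ := by
      rw [hu]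
      simp [hι, Algebra.algebraMap_eq_smul_one]
    have hinvζ := congrArg (fun q : C(K, ℂ) => q ζ) hinv
    simp only [ContinuousMap.mul_apply, huζ, ContinuousMap.one_apply] at hinvζ
    have hne : (ζ : ℂ) - z ≠ 0 := sub_ne_zero.2 fun h => hz (h ▸ ζ.2)
    rw [hg, ContinuousMap.neg_apply, div_eq_iff hne]
    linear_combination -hinvζ
  exact hg_eq ▸ S.neg_mem (Subtype.mem _)

lemma exists_polynomial_norm_sub_lt_of_mem_closure [CompactSpace K] {g : C(K, ℂ)}
    (hg : g ∈ (polynomialFunctions K).topologicalClosure) {ε : ℝ} (hε : 0 < ε) :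
    ∃ P : ℂ[X], ∀ ζ : K, ‖g ζ - P.eval (ζ : ℂ)‖ < ε := by
  rw [← SetLike.mem_coe, Subalgebra.topologicalClosure_coe, Metric.mem_closure_iff] at hg
  obtain ⟨q, ⟨P, -, rfl⟩, hq⟩ := hg ε hε
  refine ⟨P, fun ζ => ?_⟩
  simpa [dist_eq_norm] using (ContinuousMap.dist_apply_le_dist ζ).trans_lt hq

lemma exists_polynomial_norm_one_div_sub_lt (hK : IsCompact K) (hz : z ∉ K)
    (hc : ¬ Bornology.IsBounded (connectedComponentIn Kᶜ z)) {ε : ℝ} (hε : 0 < ε) :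
    ∃ P : ℂ[X], ∀ ζ ∈ K, ‖1 / (ζ - z) - P.eval ζ‖ < ε := by
  have : CompactSpace K := isCompact_iff_compactSpace.1 hK
  have hcont : Continuous fun ζ : K => 1 / ((ζ : ℂ) - z) :=
    continuous_const.div (by fun_prop) fun ζ => sub_ne_zero.2 fun h => hz (h ▸ ζ.2)
  obtain ⟨P, hP⟩ := exists_polynomial_norm_sub_lt_of_mem_closure
    (one_div_sub_mem_closure_polynomialFunctions hz hc (g := ⟨_, hcont⟩) fun _ => rfl) hε
  exact ⟨P, fun ζ hζ => hP ⟨ζ, hζ⟩⟩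

end PolynomialApproximation

/-! ### Green's formula for a Jordan region -/

section WindingIntegral

variable {γ : ℝ → ℂ} {L : ℝ}

lemma exists_derivative_eq (P : ℂ[X]) : ∃ Q : ℂ[X], derivative Q = P := by
  induction P using Polynomial.induction_on' with
  | add p q hp hq =>
    obtain ⟨P₁, rfl⟩ := hp
    obtain ⟨P₂, rfl⟩ := hq
    exact ⟨P₁ + P₂, derivative_add⟩
  | monomial n a =>
    have hn : (n + 1 : ℂ) ≠ 0 := Nat.cast_add_one_ne_zero n
    refine ⟨monomial (n + 1) (a / (n + 1)), ?_⟩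
    rw [derivative_monomial, Nat.cast_add_one, div_mul_cancel₀ a hn, Nat.add_sub_cancel]

lemma IsLipschitzLoop.contourIntegral_polynomial_eq_zero (hγ : IsLipschitzLoop γ L) (P : ℂ[X]) :
    contourIntegral γ L (fun z => P.eval z) = 0 := by
  obtain ⟨Q, rfl⟩ := exists_derivative_eq P
  exact hγ.contourIntegral_deriv_eq_zero isOpen_univ (subset_univ _) fun z _ => Q.hasDerivAt z

lemma volume_image_Icc_eq_zero (hγ : LipschitzWith 1 γ) : volume (γ '' Icc 0 L) = 0 := by
  have hIcc : μH[Module.finrank ℝ ℂ] (Icc (0 : ℝ) L) = 0 := by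
    refine hausdorffMeasure_of_dimH_lt (d := (Module.finrank ℝ ℂ : NNReal)) ?_
    refine (dimH_mono (subset_univ _)).trans_lt ?_
    rw [Real.dimH_univ, Complex.finrank_real_complex]
    norm_num
  have himage := hγ.hausdorffMeasure_image_le (Nat.cast_nonneg (Module.finrank ℝ ℂ)) (Icc 0 L)
  rw [hIcc, mul_zero] at himage
  exact Measure.absolutelyContinuous_isAddHaarMeasure volume _ (nonpos_iff_eq_zero.1 himage)

lemma continuousOn_div_sub {h : ℂ → ℂ} {K : Set ℂ} {z : ℂ} (hh : ContinuousOn h K) (hz : z ∉ K) :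
    ContinuousOn (fun ζ => h ζ / (ζ - z)) K :=
  hh.div (by fun_prop) fun ζ hζ => sub_ne_zero.2 fun h => hz (h ▸ hζ)

lemma hasDerivAt_log_div_sub {ζ z z₀ : ℂ} (h : ‖z - z₀‖ < ‖ζ - z₀‖) :
    HasDerivAt (fun w => Complex.log ((w - z) / (w - z₀))) (1 / (ζ - z) - 1 / (ζ - z₀)) ζ := by
  have hz₀ : ζ - z₀ ≠ 0 := norm_pos_iff.1 ((norm_nonneg _).trans_lt h)
  have hz : ζ - z ≠ 0 := fun h0 => h.ne' (by rw [sub_eq_zero.1 h0])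
  have hquot : HasDerivAt (fun w => (w - z) / (w - z₀))
      ((1 * (ζ - z₀) - (ζ - z) * 1) / (ζ - z₀) ^ 2) ζ :=
    ((hasDerivAt_id ζ).sub_const z).div ((hasDerivAt_id ζ).sub_const z₀) hz₀
  have hslit : (ζ - z) / (ζ - z₀) ∈ Complex.slitPlane := by
    have hsplit : (ζ - z) / (ζ - z₀) = 1 + -((z - z₀) / (ζ - z₀)) := by field_simp; ring
    rw [hsplit]
    refine Complex.mem_slitPlane_of_norm_lt_one ?_
    rwa [norm_neg, norm_div, div_lt_one (norm_pos_iff.2 hz₀)]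
  convert hquot.clog hslit using 1
  field_simp

lemma IsLipschitzLoop.windingIntegral_eq_of_norm_sub_lt (hγ : IsLipschitzLoop γ L) {z z₀ : ℂ}
    (h : ∀ ζ ∈ γ '' Icc 0 L, ‖z - z₀‖ < ‖ζ - z₀‖) :
    windingIntegral γ L z = windingIntegral γ L z₀ := by
  have hz₀ : z₀ ∉ γ '' Icc 0 L := fun hmem =>
    (norm_nonneg (z - z₀)).not_gt (by simpa using h z₀ hmem)
  have hz : z ∉ γ '' Icc 0 L := fun hmem => lt_irrefl _ (h z hmem)
  rw [← sub_eq_zero, windingIntegral, windingIntegral,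
    ← contourIntegral_sub hγ.length_pos.le hγ.lipschitz (continuousOn_div_sub continuousOn_const hz)
      (continuousOn_div_sub continuousOn_const hz₀)]
  exact hγ.contourIntegral_deriv_eq_zero (W := {ζ | ‖z - z₀‖ < ‖ζ - z₀‖})
    (isOpen_lt continuous_const (by fun_prop)) h fun ζ hζ => hasDerivAt_log_div_sub hζ

lemma IsLipschitzLoop.eventually_windingIntegral_eq (hγ : IsLipschitzLoop γ L) {z₀ : ℂ}
    (hz₀ : z₀ ∉ γ '' Icc 0 L) :
    ∀ᶠ z in 𝓝 z₀, windingIntegral γ L z = windingIntegral γ L z₀ := by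
  obtain ⟨r, hr, hball⟩ := Metric.isOpen_iff.1
    (isCompact_image_Icc hγ.lipschitz).isClosed.isOpen_compl z₀ hz₀
  filter_upwards [Metric.ball_mem_nhds z₀ hr] with z hz
  refine hγ.windingIntegral_eq_of_norm_sub_lt fun ζ hζ => ?_
  have hζr : r ≤ dist ζ z₀ := not_lt.1 fun hlt => hball hlt hζ
  simpa only [dist_eq_norm] using (Metric.mem_ball.1 hz).trans_le hζr

lemma IsLipschitzLoop.exists_forall_windingIntegral_eq (hγ : IsLipschitzLoop γ L) {W : Set ℂ}
    (hW : IsPreconnected W) (hdisj : Disjoint W (γ '' Icc 0 L)) :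
    ∃ c, ∀ z ∈ W, windingIntegral γ L z = c := by
  rcases W.eq_empty_or_nonempty with rfl | ⟨z₁, hz₁⟩
  · exact ⟨0, fun z hz => hz.elim⟩
  refine ⟨windingIntegral γ L z₁, fun z hz => hW.induction₂
    (fun x y => windingIntegral γ L x = windingIntegral γ L y) (fun x hx => ?_)
    (fun _ _ _ _ _ _ => Eq.trans) (fun _ _ _ _ => Eq.symm) hz hz₁⟩
  filter_upwards [nhdsWithin_le_nhds
    (hγ.eventually_windingIntegral_eq (disjoint_left.1 hdisj hx))] with y hy using hy.symm

end WindingIntegral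

section Approximation

lemma exists_continuous_eqOn {K : Set ℂ} (hK : IsClosed K) {ψ : ℂ → ℂ} (hψ : ContinuousOn ψ K) :
    ∃ Ψ : ℂ → ℂ, Continuous Ψ ∧ EqOn Ψ ψ K := by
  obtain ⟨Ψ, hΨ⟩ := ContinuousMap.exists_restrict_eq hK ⟨K.domRestrict ψ, hψ.domRestrict⟩
  exact ⟨Ψ, Ψ.continuous, fun z hz => DFunLike.congr_fun hΨ ⟨z, hz⟩⟩

lemma exists_contDiff_eqOn_cthickening_one {K V : Set ℂ} (hK : IsCompact K) (hV : IsOpen V)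
    (hKV : K ⊆ V) :
    ∃ r > 0, ∃ χ : ℂ → ℂ, ContDiff ℝ ∞ χ ∧ HasCompactSupport χ ∧ tsupport χ ⊆ V ∧
      EqOn χ 1 (Metric.cthickening r K) := by
  obtain ⟨r, hr, hrV⟩ := hK.exists_cthickening_subset_open hV hKV
  obtain ⟨b, hb, -, hsupp, hone⟩ := exists_contMDiff_support_eq_eq_one_iff (n := (⊤ : ℕ∞))
    (modelWithCornersSelf ℝ ℂ) Metric.isOpen_thickening Metric.isClosed_cthickening
    (Metric.cthickening_subset_thickening' hr (half_lt_self hr) K)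
  have htsupp : tsupport (fun z => (b z : ℂ)) ⊆ Metric.cthickening r K := by
    refine closure_minimal (fun z hz => ?_) Metric.isClosed_cthickening
    have hzb : z ∈ Function.support b := fun h => hz (by simp [h])
    exact Metric.thickening_subset_cthickening _ _ (hsupp ▸ hzb)
  refine ⟨r / 2, half_pos hr, fun z => (b z : ℂ),
    Complex.ofRealCLM.contDiff.comp (contMDiff_iff_contDiff.1 hb),
    hK.cthickening.of_isClosed_subset (isClosed_tsupport _) htsupp, htsupp.trans hrV, ?_⟩
  intro z hz
  simp [(hone z).1 hz]

lemma exists_contDiff_hasCompactSupport_norm_sub_lt {K : Set ℂ} (hK : IsCompact K) {ψ : ℂ → ℂ}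
    (hψ : ContinuousOn ψ K) {ε : ℝ} (hε : 0 < ε) :
    ∃ φ : ℂ → ℂ, ContDiff ℝ 1 φ ∧ HasCompactSupport φ ∧ ∀ z ∈ K, ‖φ z - ψ z‖ < ε := by
  obtain ⟨Ψ, hΨ, hΨψ⟩ := exists_continuous_eqOn hK.isClosed hψ
  obtain ⟨g, hg, hgΨ, -⟩ := hΨ.exists_contDiff_approx 1 (continuous_const (y := ε)) fun _ => hε
  obtain ⟨r, -, χ, hχ, hsupp, -, hone⟩ :=
    exists_contDiff_eqOn_cthickening_one hK isOpen_univ (subset_univ K)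
  refine ⟨fun z => χ z * g z, (hχ.of_le (by exact_mod_cast le_top)).mul hg, hsupp.mul_right,
    fun z hz => ?_⟩
  have hχz : χ z = 1 := hone (Metric.self_subset_cthickening K hz)
  simpa only [hχz, one_mul, dist_eq_norm, hΨψ hz] using hgΨ z

lemma exists_continuous_comp_eqOn {K : Set ℝ} (hK : IsCompact K) {γ g : ℝ → ℂ}
    (hγ : Continuous γ) (hg : Continuous g)
    (hfactor : ∀ x ∈ K, ∀ y ∈ K, γ x = γ y → g x = g y) :
    ∃ Ψ : ℂ → ℂ, Continuous Ψ ∧ EqOn (Ψ ∘ γ) g K := by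
  have : CompactSpace K := isCompact_iff_compactSpace.1 hK
  let q : C(K, γ '' K) :=
    ⟨fun x => ⟨γ x, mem_image_of_mem γ x.2⟩, (hγ.comp continuous_subtype_val).subtype_mk _⟩
  let g' : C(K, ℂ) := ⟨fun x => g x, hg.comp continuous_subtype_val⟩
  have hqsurj : Function.Surjective q := by
    rintro ⟨_, x, hx, rfl⟩
    exact ⟨⟨x, hx⟩, rfl⟩
  have hq : IsQuotientMap q := q.continuous.isClosedMap.isQuotientMap q.continuous hqsurj
  have hfac : Function.FactorsThrough g' q := fun x y hxy =>
    hfactor x x.2 y y.2 (congrArg Subtype.val hxy)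
  obtain ⟨Ψ, hΨ⟩ := ContinuousMap.exists_restrict_eq (hK.image hγ).isClosed (hq.lift g' hfac)
  refine ⟨Ψ, Ψ.continuous, fun x hx => ?_⟩
  exact (DFunLike.congr_fun hΨ (q ⟨x, hx⟩)).trans
    (DFunLike.congr_fun (hq.lift_comp g' hfac) ⟨x, hx⟩)

end Approximation

section Nondegenerate

variable {γ : ℝ → ℂ} {L : ℝ}

lemma contourIntegral_eq_zero_of_forall_contDiff (hL : 0 < L) (hγ : LipschitzWith 1 γ)
    (h0 : ∀ φ : ℂ → ℂ, ContDiff ℝ 1 φ → HasCompactSupport φ → contourIntegral γ L φ = 0)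
    {ψ : ℂ → ℂ} (hψ : Continuous ψ) : contourIntegral γ L ψ = 0 := by
  refine norm_le_zero_iff.1 (le_of_forall_pos_le_add fun ε hε => ?_)
  obtain ⟨φ, hφ, hsupp, hφψ⟩ := exists_contDiff_hasCompactSupport_norm_sub_lt
    (isCompact_image_Icc (L := L) hγ) hψ.continuousOn (div_pos hε hL)
  have hle := norm_contourIntegral_le hL.le hγ fun z hz => (hφψ z hz).le
  rwa [contourIntegral_sub hL.le hγ hφ.continuous.continuousOn hψ.continuousOn, h0 φ hφ hsupp,
    zero_sub, norm_neg, div_mul_cancel₀ ε hL.ne', ← zero_add ε] at hle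

lemma eq_or_endpoints_of_apply_eq (hL : 0 < L) (hclosed : γ 0 = γ L)
    (hinj : InjOn γ (Ico 0 L)) {x y : ℝ} (hx : x ∈ Icc 0 L) (hy : y ∈ Icc 0 L)
    (hxy : γ x = γ y) : x = y ∨ x ∉ Ioo 0 L ∧ y ∉ Ioo 0 L := by
  have h0 : (0 : ℝ) ∈ Ico 0 L := left_mem_Ico.2 hL
  rcases hx.2.eq_or_lt with rfl | hxL <;> rcases hy.2.eq_or_lt with rfl | hyL
  · exact .inl rfl
  · have hy0 : 0 = y := hinj h0 ⟨hy.1, hyL⟩ (hclosed.trans hxy)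
    exact .inr ⟨by simp, by simp [← hy0]⟩
  · have hx0 : x = 0 := hinj ⟨hx.1, hxL⟩ h0 (hxy.trans hclosed.symm)
    exact .inr ⟨by simp [hx0], by simp⟩
  · exact .inl (hinj ⟨hx.1, hxL⟩ ⟨hy.1, hyL⟩ hxy)

lemma IsLipschitzLoop.integral_smul_deriv_eq_zero (hγ : IsLipschitzLoop γ L)
    (hinj : InjOn γ (Ico 0 L))
    (h0 : ∀ ψ : ℂ → ℂ, Continuous ψ → contourIntegral γ L ψ = 0) {g : ℝ → ℝ} (hg : Continuous g)
    (hsupp : tsupport g ⊆ Ioo 0 L) : ∫ x, g x • deriv γ x = 0 := by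
  have hg0 : ∀ x ∉ Ioo 0 L, g x = 0 := fun x hx =>
    image_eq_zero_of_notMem_tsupport fun h => hx (hsupp h)
  obtain ⟨Ψ, hΨ, hΨγ⟩ := exists_continuous_comp_eqOn (isCompact_Icc (a := 0) (b := L))
    hγ.lipschitz.continuous (Complex.continuous_ofReal.comp hg) fun x hx y hy hxy => by
      rcases eq_or_endpoints_of_apply_eq hγ.length_pos hγ.closed hinj hx hy hxy with rfl | hend
      · rfl
      · simp only [Function.comp_apply, hg0 x hend.1, hg0 y hend.2]
  have hΨ0 := h0 Ψ hΨ
  rw [contourIntegral, intervalIntegral.integral_of_le hγ.length_pos.le,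
    ← integral_indicator measurableSet_Ioc] at hΨ0
  rw [← hΨ0]
  congr 1 with x
  by_cases hx : x ∈ Ioc 0 L
  · have hΨx : Ψ (γ x) = g x := hΨγ (Ioc_subset_Icc_self hx)
    rw [indicator_of_mem hx, hΨx, Complex.real_smul]
  · rw [indicator_of_notMem hx, hg0 x fun h => hx (Ioo_subset_Ioc_self h), zero_smul]

lemma IsLipschitzLoop.exists_contourIntegral_ne_zero (hγ : IsLipschitzLoop γ L)
    (hinj : InjOn γ (Ico 0 L)) :
    ∃ φ : ℂ → ℂ, ContDiff ℝ 1 φ ∧ HasCompactSupport φ ∧ contourIntegral γ L φ ≠ 0 := by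
  by_contra! h0
  have hcont := fun ψ hψ =>
    contourIntegral_eq_zero_of_forall_contDiff (ψ := ψ) hγ.length_pos hγ.lipschitz h0 hψ
  have hloc : LocallyIntegrable (deriv γ) := (locallyIntegrable_const (1 : ℝ)).mono
    (measurable_deriv γ).aestronglyMeasurable
    (ae_of_all _ fun x => by simpa using norm_deriv_le_one hγ.lipschitz x)
  have hderiv : ∀ᵐ x, x ∈ Ioo 0 L → deriv γ x = 0 :=
    isOpen_Ioo.ae_eq_zero_of_integral_contDiff_smul_eq_zero (hloc.locallyIntegrableOn _)
      fun g hg _ hsub => hγ.integral_smul_deriv_eq_zero hinj hcont hg.continuous hsub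
  have hmid : L / 2 ∈ Ioo 0 L := ⟨half_pos hγ.length_pos, half_lt_self hγ.length_pos⟩
  have hconst : γ (L / 2) - γ 0 = 0 := by
    rw [← integral_deriv_eq_sub_of_lipschitzWith hγ.lipschitz,
      intervalIntegral.integral_of_le hmid.1.le]
    refine setIntegral_eq_zero_of_ae_eq_zero ?_
    filter_upwards [hderiv] with x hx hx' using hx ⟨hx'.1, hx'.2.trans_lt hmid.2⟩
  exact hmid.1.ne' <| hinj (Ioo_subset_Ico_self hmid) (left_mem_Ico.2 hγ.length_pos)
    (sub_eq_zero.1 hconst)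

end Nondegenerate

/-- `E` is the closed region enclosed by the simple loop `γ`, parametrized on `[0, L]`. The
separation properties that the Jordan curve theorem would provide are part of the notion. -/
structure IsJordanRegion (E : Set ℂ) (γ : ℝ → ℂ) (L : ℝ) : Prop extends IsLipschitzLoop γ L where
  injOn : InjOn γ (Ico 0 L)
  isCompact : IsCompact E
  frontier_eq : frontier E = γ '' Icc 0 L
  isPreconnected_interior : IsPreconnected (interior E)
  not_isBounded_component : ∀ z ∉ E, ¬ Bornology.IsBounded (connectedComponentIn Eᶜ z)

/-- `κ` is the constant of Green's formula `∫_E dbar φ = κ ∫_γ φ`. Its value is `±i`, depending on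
the orientation of `γ`, but only `κ ≠ 0` matters. -/
def IsGreenConstant (E : Set ℂ) (γ : ℝ → ℂ) (L : ℝ) (κ : ℂ) : Prop :=
  ∀ φ : ℂ → ℂ, ContDiff ℝ 1 φ → HasCompactSupport φ →
    ∫ z in E, dbar φ z = κ * contourIntegral γ L φ

namespace IsJordanRegion

variable {E : Set ℂ} {γ : ℝ → ℂ} {L : ℝ}

lemma image_subset (hE : IsJordanRegion E γ L) : γ '' Icc 0 L ⊆ E :=
  hE.frontier_eq ▸ hE.isCompact.isClosed.frontier_subset

lemma contourIntegral_div_sub_eq_zero (hE : IsJordanRegion E γ L) {h : ℂ → ℂ}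
    (hh : ContinuousOn h (γ '' Icc 0 L))
    (hmoments : ∀ P : ℂ[X], contourIntegral γ L (fun z => P.eval z * h z) = 0) {z : ℂ}
    (hz : z ∉ E) : contourIntegral γ L (fun ζ => h ζ / (ζ - z)) = 0 := by
  have hL := hE.length_pos
  obtain ⟨C, hC⟩ := (isCompact_image_Icc hE.lipschitz).exists_bound_of_continuousOn hh
  have hC0 : 0 ≤ C := (norm_nonneg _).trans (hC (γ 0) ⟨0, left_mem_Icc.2 hL.le, rfl⟩)
  refine norm_le_zero_iff.1 (le_of_forall_pos_le_add fun ε hε => ?_)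
  obtain ⟨P, hP⟩ := exists_polynomial_norm_one_div_sub_lt hE.isCompact hz
    (hE.not_isBounded_component z hz) (ε := ε / ((C + 1) * L)) (by positivity)
  have hsub := contourIntegral_sub hL.le hE.lipschitz
    (continuousOn_div_sub hh fun h => hz (hE.image_subset h))
    (k := fun ζ => P.eval ζ * h ζ) (P.continuous.continuousOn.mul hh)
  rw [hmoments, sub_zero] at hsub
  calc ‖contourIntegral γ L fun ζ => h ζ / (ζ - z)‖
      ≤ (C + 1) * (ε / ((C + 1) * L)) * L := by
        rw [← hsub]
        refine norm_contourIntegral_le hL.le hE.lipschitz fun ζ hζ => ?_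
        rw [show h ζ / (ζ - z) - P.eval ζ * h ζ = h ζ * (1 / (ζ - z) - P.eval ζ) by ring, norm_mul]
        exact mul_le_mul ((hC ζ hζ).trans (le_add_of_nonneg_right zero_le_one))
          (hP ζ (hE.image_subset hζ)).le (norm_nonneg _) (by positivity)
    _ = 0 + ε := by field_simp; ring

lemma windingIntegral_eq_zero (hE : IsJordanRegion E γ L) {z : ℂ} (hz : z ∉ E) :
    windingIntegral γ L z = 0 :=
  hE.contourIntegral_div_sub_eq_zero continuousOn_const
    (fun P => by simpa only [mul_one] using hE.contourIntegral_polynomial_eq_zero P) hz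

lemma contourIntegral_dslope (hE : IsJordanRegion E γ L)
    {F : ℂ → ℂ}
    (hF : ContinuousOn F (γ '' Icc 0 L)) {z : ℂ} (hz : z ∉ E) :
    contourIntegral γ L (dslope F z) = contourIntegral γ L fun ζ => F ζ / (ζ - z) := by
  have hzγ : z ∉ γ '' Icc 0 L := fun h => hz (hE.image_subset h)
  have hL := hE.length_pos.le
  have hcongr : EqOn (dslope F z) (fun ζ => F ζ / (ζ - z) - F z * (1 / (ζ - z)))
      (γ '' Icc 0 L) := fun ζ hζ => by
    rw [dslope_of_ne F (ne_of_mem_of_not_mem hζ hzγ), slope_def_field]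
    ring
  have hkernel : ContinuousOn (fun ζ => F z * (1 / (ζ - z))) (γ '' Icc 0 L) :=
    (continuousOn_div_sub continuousOn_const hzγ).const_mul _
  rw [contourIntegral_congr hL hcongr,
    contourIntegral_sub hL hE.lipschitz (continuousOn_div_sub hF hzγ) hkernel,
    contourIntegral_const_mul, ← windingIntegral, hE.windingIntegral_eq_zero hz, mul_zero, sub_zero]

lemma exists_two_pi_mul_contourIntegral_eq (hE : IsJordanRegion E γ L) :
    ∃ c : ℂ, ∀ φ : ℂ → ℂ, ContDiff ℝ 1 φ → HasCompactSupport φ →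
      2 * Real.pi * contourIntegral γ L φ = c * ∫ z in E, dbar φ z := by
  have hdisj : Disjoint (interior E) (γ '' Icc 0 L) :=
    hE.frontier_eq ▸ disjoint_interior_frontier
  obtain ⟨c, hc⟩ := hE.exists_forall_windingIntegral_eq hE.isPreconnected_interior hdisj
  refine ⟨c, fun φ hφ hsupp => ?_⟩
  rw [two_pi_mul_contourIntegral hE.length_pos.le hE.lipschitz hφ hsupp,
    ← integral_indicator hE.isCompact.measurableSet, ← integral_const_mul]
  refine integral_congr_ae ?_
  filter_upwards [measure_eq_zero_iff_ae_notMem.1 (volume_image_Icc_eq_zero hE.lipschitz)] with z hz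
  by_cases hzE : z ∈ E
  · have hzint : z ∈ interior E := by
      rw [← hE.frontier_eq, hE.isCompact.isClosed.frontier_eq] at hz
      exact not_not.1 fun h => hz ⟨hzE, h⟩
    rw [indicator_of_mem hzE, hc z hzint, mul_comm]
  · rw [indicator_of_notMem hzE, hE.windingIntegral_eq_zero hzE, mul_zero, mul_zero]

lemma exists_isGreenConstant (hE : IsJordanRegion E γ L) :
    ∃ κ, κ ≠ 0 ∧ IsGreenConstant E γ L κ := by
  have hpi : (2 * Real.pi : ℂ) ≠ 0 := mul_ne_zero two_ne_zero (mod_cast Real.pi_ne_zero)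
  obtain ⟨c, hc⟩ := hE.exists_two_pi_mul_contourIntegral_eq
  have hc0 : c ≠ 0 := by
    rintro rfl
    obtain ⟨φ, hφ, hsupp, hne⟩ := hE.exists_contourIntegral_ne_zero hE.injOn
    exact mul_ne_zero hpi hne ((hc φ hφ hsupp).trans (zero_mul _))
  refine ⟨2 * Real.pi / c, div_ne_zero hpi hc0, fun φ hφ hsupp => ?_⟩
  rw [div_mul_eq_mul_div, eq_div_iff hc0, hc φ hφ hsupp, mul_comm]

end IsJordanRegion

/-! ### Cutoff functions around a rectifiable curve -/

/-- `η` vanishes near `K`, equals `1` at distance at least `ε` from `K`, and its total variation is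
at most `C`. The bound `C` stays fixed while `ε → 0`, which is where rectifiability enters. -/
structure IsCollarCutoff (K : Set ℂ) (C ε : ℝ) (η : ℂ → ℂ) : Prop where
  contDiff : ContDiff ℝ 1 η
  eventuallyEq_zero : ∀ z ∈ K, η =ᶠ[𝓝 z] 0
  norm_le_one : ∀ z, ‖η z‖ ≤ 1
  integrable_dbar : Integrable (dbar η)
  integral_norm_dbar_le : ∫ z, ‖dbar η z‖ ≤ C
  eq_one : ∀ z ∉ Metric.thickening ε K, η z = 1

section CollarCutoff

variable {K : Set ℂ} {C ε : ℝ} {η : ℂ → ℂ}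

lemma dbar_const (c z : ℂ) : dbar (fun _ => c) z = 0 :=
  dbar_eq_zero (differentiableAt_const c)

lemma IsCollarCutoff.mono (hη : IsCollarCutoff K C ε η) {K' : Set ℂ} {C' ε' : ℝ} (hK : K' ⊆ K)
    (hC : C ≤ C') (hthick : Metric.thickening ε K ⊆ Metric.thickening ε' K') :
    IsCollarCutoff K' C' ε' η where
  contDiff := hη.contDiff
  eventuallyEq_zero z hz := hη.eventuallyEq_zero z (hK hz)
  norm_le_one := hη.norm_le_one
  integrable_dbar := hη.integrable_dbar
  integral_norm_dbar_le := hη.integral_norm_dbar_le.trans hC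
  eq_one z hz := hη.eq_one z fun h => hz (hthick h)

lemma norm_dbar_prod_le {ι : Type*} (s : Finset ι) {g : ι → ℂ → ℂ}
    (hg : ∀ i ∈ s, Differentiable ℝ (g i)) (hg1 : ∀ i ∈ s, ∀ z, ‖g i z‖ ≤ 1) (z : ℂ) :
    ‖dbar (fun z => ∏ i ∈ s, g i z) z‖ ≤ ∑ i ∈ s, ‖dbar (g i) z‖ := by
  classical
  induction s using Finset.induction_on with
  | empty => simp [dbar_const]
  | insert a s ha ih =>
    rw [Finset.forall_mem_insert] at hg hg1
    have hprod1 : ‖∏ i ∈ s, g i z‖ ≤ 1 := by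
      rw [norm_prod]
      exact Finset.prod_le_one (fun _ _ => norm_nonneg _) fun i hi => hg1.2 i hi z
    simp only [Finset.prod_insert ha, Finset.sum_insert ha]
    have hdiff : DifferentiableAt ℝ (fun z => ∏ i ∈ s, g i z) z :=
      (HasFDerivAt.finsetProd fun i hi => (hg.2 i hi z).hasFDerivAt).differentiableAt
    rw [dbar_mul (hg.1 z) hdiff]
    refine (norm_add_le _ _).trans (add_le_add ?_ ?_) <;> rw [norm_mul]
    · exact mul_le_of_le_one_right (norm_nonneg _) hprod1
    · exact (mul_le_of_le_one_left (norm_nonneg _) (hg1.1 z)).trans (ih hg.2 hg1.2)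

lemma isCollarCutoff_prod {ι : Type*} (s : Finset ι) {K : ι → Set ℂ} {C : ι → ℝ}
    {η : ι → ℂ → ℂ} (hη : ∀ i ∈ s, IsCollarCutoff (K i) (C i) ε (η i)) :
    IsCollarCutoff (⋃ i ∈ s, K i) (∑ i ∈ s, C i) ε (fun z => ∏ i ∈ s, η i z) := by
  have hcont : ContDiff ℝ 1 fun z => ∏ i ∈ s, η i z := contDiff_prod fun i hi => (hη i hi).contDiff
  have hle := norm_dbar_prod_le s (fun i hi => (hη i hi).contDiff.differentiable one_ne_zero)
    fun i hi => (hη i hi).norm_le_one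
  have hsum : Integrable fun z => ∑ i ∈ s, ‖dbar (η i) z‖ :=
    integrable_finsetSum _ fun i hi => (hη i hi).integrable_dbar.norm
  have hInt : Integrable (dbar fun z => ∏ i ∈ s, η i z) :=
    hsum.mono' (continuous_dbar hcont).aestronglyMeasurable (ae_of_all _ hle)
  refine ⟨hcont, fun z hz => ?_, fun z => ?_, hInt, ?_, fun z hz => ?_⟩
  · obtain ⟨i, hi, hzi⟩ := mem_iUnion₂.1 hz
    filter_upwards [(hη i hi).eventuallyEq_zero z hzi] with y hy
    exact Finset.prod_eq_zero hi hy
  · rw [norm_prod]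
    exact Finset.prod_le_one (fun _ _ => norm_nonneg _) fun i hi => (hη i hi).norm_le_one z
  · refine (integral_mono hInt.norm hsum hle).trans ?_
    rw [integral_finsetSum _ fun i hi => (hη i hi).integrable_dbar.norm]
    exact Finset.sum_le_sum fun i hi => (hη i hi).integral_norm_dbar_le
  · refine Finset.prod_eq_one fun i hi => (hη i hi).eq_one z fun h => hz ?_
    exact Metric.thickening_subset_of_subset ε (subset_biUnion_of_mem hi) h

lemma dbar_comp_smul_sub {b : ℂ → ℂ} (hb : Differentiable ℝ b) (r : ℝ) (w z : ℂ) :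
    dbar (fun z => b (r • (z - w))) z = r * dbar b (r • (z - w)) := by
  have hcomp : HasFDerivAt (fun z => b (r • (z - w)))
      ((fderiv ℝ b (r • (z - w))).comp (r • ContinuousLinearMap.id ℝ ℂ)) z :=
    HasFDerivAt.comp z (hb _).hasFDerivAt (((hasFDerivAt_id z).sub_const w).const_smul r)
  rw [dbar, dbar, hcomp.fderiv]
  simp only [Complex.real_smul, ContinuousLinearMap.comp_smulₛₗ, Real.ringHom_apply,
    ContinuousLinearMap.comp_id, smul_apply]
  ring

lemma integral_norm_dbar_comp_smul_sub {b : ℂ → ℂ} (hb : Differentiable ℝ b) {r : ℝ} (hr : 0 < r)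
    (w : ℂ) : ∫ z, ‖dbar (fun z => b (r • (z - w))) z‖ = r⁻¹ * ∫ z, ‖dbar b z‖ := by
  simp only [dbar_comp_smul_sub hb, norm_mul, Complex.norm_real, Real.norm_of_nonneg hr.le]
  rw [integral_const_mul, integral_sub_right_eq_self (fun z => ‖dbar b (r • z)‖) w,
    Measure.integral_comp_smul volume (fun z => ‖dbar b z‖) r, Complex.finrank_real_complex,
    abs_of_pos (by positivity), smul_eq_mul]
  field_simp

lemma integrable_dbar_comp_smul_sub {b : ℂ → ℂ} (hb : ContDiff ℝ 1 b) (hsupp : HasCompactSupport b)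
    {r : ℝ} (hr : 0 < r) (w : ℂ) : Integrable (dbar fun z => b (r • (z - w))) := by
  simp only [funext (dbar_comp_smul_sub (hb.differentiable one_ne_zero) r w)]
  exact (((integrable_dbar hb hsupp).comp_smul hr.ne').comp_sub_right w).const_mul _

lemma dbar_const_sub (c : ℂ) (φ : ℂ → ℂ) : dbar (fun z => c - φ z) = -dbar φ := by
  ext z
  simp only [dbar, fderiv_const_sub, neg_apply, Pi.neg_apply]
  ring

lemma exists_isCollarCutoff_closedBall : ∃ C : ℝ, ∀ (w : ℂ) (r : ℝ), 0 < r →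
    ∃ η, IsCollarCutoff (Metric.closedBall w r) (C * r) (2 * r) η := by
  let b₀ : ContDiffBump (0 : ℂ) := ⟨2, 3, by norm_num, by norm_num⟩
  let b : ℂ → ℂ := fun z => (b₀ z : ℂ)
  have hb : ContDiff ℝ 1 b := Complex.ofRealCLM.contDiff.comp b₀.contDiff
  have hsupp : HasCompactSupport b :=
    b₀.hasCompactSupport.comp_left (g := fun x : ℝ => (x : ℂ)) Complex.ofReal_zero
  refine ⟨∫ z, ‖dbar b z‖, fun w r hr => ?_⟩
  have hnorm : ∀ z, ‖r⁻¹ • (z - w)‖ = dist z w / r := fun z => by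
    rw [norm_smul, norm_inv, Real.norm_of_nonneg hr.le, dist_eq_norm, inv_mul_eq_div]
  have hdbar := dbar_const_sub 1 fun z => b (r⁻¹ • (z - w))
  refine ⟨fun z => 1 - b (r⁻¹ • (z - w)), contDiff_const.sub (hb.comp (by fun_prop)),
    fun z hz => ?_, fun z => ?_, ?_, ?_, fun z hz => ?_⟩
  · have hz2 : dist z w < 2 * r := (Metric.mem_closedBall.1 hz).trans_lt (by linarith)
    filter_upwards [Metric.isOpen_ball.mem_nhds hz2] with y hy
    have hone : b₀ (r⁻¹ • (y - w)) = 1 := b₀.one_of_mem_closedBall <| by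
      rw [mem_closedBall_zero_iff, hnorm]
      exact (div_le_iff₀ hr).2 (Metric.mem_ball.1 hy).le
    simp only [b, hone, Complex.ofReal_one, sub_self, Pi.zero_apply]
  · have hreal : 1 - b (r⁻¹ • (z - w)) = ((1 - b₀ (r⁻¹ • (z - w)) : ℝ) : ℂ) := by simp [b]
    rw [hreal, Complex.norm_real, Real.norm_of_nonneg (sub_nonneg.2 b₀.le_one)]
    exact sub_le_self _ b₀.nonneg
  · exact hdbar ▸ (integrable_dbar_comp_smul_sub hb hsupp (inv_pos.2 hr) w).neg
  · simp only [hdbar, Pi.neg_apply, norm_neg]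
    rw [integral_norm_dbar_comp_smul_sub (hb.differentiable one_ne_zero) (inv_pos.2 hr), inv_inv,
      mul_comm]
  · rw [thickening_closedBall (by positivity) hr.le, Metric.mem_ball, not_lt] at hz
    have hzero : b₀ (r⁻¹ • (z - w)) = 0 := b₀.zero_of_le_dist <| by
      rw [dist_zero_right, hnorm]
      exact (le_div_iff₀ hr).2 ((by linarith : 3 * r ≤ 2 * r + r).trans hz)
    simp only [b, hzero, Complex.ofReal_zero, sub_zero]

lemma image_Icc_subset_biUnion_closedBall {γ : ℝ → ℂ} {L : ℝ} (hγ : LipschitzWith 1 γ) {n : ℕ}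
    (hL : 0 < L) (hn : 0 < n) :
    γ '' Icc 0 L ⊆ ⋃ j ∈ Finset.range (n + 1), Metric.closedBall (γ (j * (L / n))) (L / n) := by
  rintro _ ⟨x, hx, rfl⟩
  have hr : 0 < L / n := by positivity
  have hfloor := Nat.floor_le (div_nonneg hx.1 hr.le)
  have hlt := (Nat.lt_floor_add_one (x / (L / n))).le
  refine mem_iUnion₂.2 ⟨⌊x / (L / n)⌋₊, ?_, ?_⟩
  · refine Finset.mem_range.2 (Nat.lt_succ_of_le (Nat.floor_le_of_le ?_))
    rw [div_le_iff₀ hr, mul_div_cancel₀ L (by positivity)]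
    exact hx.2
  · rw [le_div_iff₀ hr] at hfloor
    rw [div_le_iff₀ hr, add_one_mul] at hlt
    refine Metric.mem_closedBall.2 ((hγ.dist_le_mul _ _).trans ?_)
    rw [NNReal.coe_one, one_mul, Real.dist_eq, abs_of_nonneg (sub_nonneg.2 hfloor)]
    linarith

lemma exists_isCollarCutoff_image_Icc {γ : ℝ → ℂ} {L : ℝ} (hγ : LipschitzWith 1 γ) (hL : 0 < L) :
    ∃ C : ℝ, ∀ ε > 0, ∃ η, IsCollarCutoff (γ '' Icc 0 L) C ε η := by
  obtain ⟨C, hC⟩ := exists_isCollarCutoff_closedBall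
  refine ⟨2 * (|C| * L), fun ε hε => ?_⟩
  obtain ⟨n, hn⟩ := exists_nat_gt (3 * L / ε)
  have hn0 : (0 : ℝ) < n := lt_of_le_of_lt (by positivity) hn
  have hn1 : (1 : ℝ) ≤ n := Nat.one_le_cast.2 (Nat.cast_pos.1 hn0)
  have hr : 0 < L / n := by positivity
  have hrε : 2 * (L / n) + L / n ≤ ε := by
    rw [div_lt_iff₀ hε] at hn
    rw [← add_one_mul, ← mul_div_assoc, div_le_iff₀ hn0]
    linarith
  choose η hη using fun j : ℕ => hC (γ (j * (L / n))) (L / n) hr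
  refine ⟨_, (isCollarCutoff_prod (Finset.range (n + 1)) fun j _ => hη j).mono
    (image_Icc_subset_biUnion_closedBall hγ hL (Nat.cast_pos.1 hn0)) ?_ ?_⟩
  · rw [Finset.sum_const, Finset.card_range, nsmul_eq_mul, Nat.cast_add_one]
    calc (n + 1 : ℝ) * (C * (L / n)) ≤ (n + 1) * (|C| * (L / n)) := by gcongr; exact le_abs_self C
      _ ≤ (n + n) * (|C| * (L / n)) := by gcongr
      _ = 2 * (|C| * L) := by field_simp; ring
  · have hballs : (⋃ j ∈ Finset.range (n + 1), Metric.closedBall (γ (j * (L / n))) (L / n)) ⊆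
        Metric.cthickening (L / n) (γ '' Icc 0 L) := by
      refine iUnion₂_subset fun j hj => Metric.closedBall_subset_cthickening ?_ _
      refine mem_image_of_mem γ ⟨by positivity, ?_⟩
      have hjn : (j : ℝ) ≤ n := Nat.cast_le.2 (Nat.lt_succ_iff.1 (Finset.mem_range.1 hj))
      calc (j : ℝ) * (L / n) ≤ n * (L / n) := by gcongr
        _ = L := mul_div_cancel₀ L hn0.ne'
    exact ((Metric.thickening_subset_of_subset _ hballs).trans
      (Metric.thickening_cthickening_subset _ hr.le _)).trans (Metric.thickening_mono hrε _)

lemma IsCollarCutoff.exists_of_frontier {E : Set ℂ} (hE : IsClosed E) (hε : 0 < ε)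
    (hη : IsCollarCutoff (frontier E) C ε η) : ∃ η', IsCollarCutoff E C ε η' := by
  classical
  let η' : ℂ → ℂ := fun z => if z ∈ interior E then 0 else η z
  have hin : ∀ z ∈ E, η' =ᶠ[𝓝 z] 0 := fun z hz => by
    by_cases hzint : z ∈ interior E
    · filter_upwards [isOpen_interior.mem_nhds hzint] with y hy using if_pos hy
    · filter_upwards [hη.eventuallyEq_zero z (hE.frontier_eq ▸ ⟨hz, hzint⟩)] with y hy
      simp [η', hy]
  have hout : ∀ z ∉ E, η' =ᶠ[𝓝 z] η := fun z hz => by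
    filter_upwards [hE.isOpen_compl.mem_nhds hz] with y hy
    exact if_neg fun h => hy (interior_subset h)
  have hcont : ContDiff ℝ 1 η' := contDiff_iff_contDiffAt.2 fun z => by
    by_cases hz : z ∈ E
    · exact contDiffAt_const.congr_of_eventuallyEq (hin z hz)
    · exact hη.contDiff.contDiffAt.congr_of_eventuallyEq (hout z hz)
  have hle : ∀ z, ‖dbar η' z‖ ≤ ‖dbar η z‖ := fun z => by
    by_cases hz : z ∈ E
    · rw [dbar_congr (hin z hz)]
      exact (norm_le_zero_iff.2 (dbar_const 0 z)).trans (norm_nonneg _)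
    · rw [dbar_congr (hout z hz)]
  have hInt : Integrable (dbar η') :=
    hη.integrable_dbar.mono (continuous_dbar hcont).aestronglyMeasurable (ae_of_all _ hle)
  refine ⟨η', hcont, hin, fun z => ?_, hInt,
    (integral_mono hInt.norm hη.integrable_dbar.norm hle).trans hη.integral_norm_dbar_le,
    fun z hz => ?_⟩
  · by_cases hz : z ∈ interior E
    · simp [η', hz]
    · simpa only [η', if_neg hz] using hη.norm_le_one z
  · have hzE : z ∉ E := fun h => hz (Metric.self_subset_thickening hε E h)
    rw [(hout z hzE).self_of_nhds]
    exact hη.eq_one z fun h => hz (Metric.thickening_subset_of_subset ε hE.frontier_subset h)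

end CollarCutoff

section CollarLimit

variable {K S : Set ℂ} {C ε : ℝ} {η φ ψ : ℂ → ℂ}

lemma integral_mul_dbar_eq_neg (hφ : ContDiff ℝ 1 φ) (hsupp : HasCompactSupport φ)
    (hψ : ContDiff ℝ 1 ψ) : ∫ z, φ z * dbar ψ z = -∫ z, dbar φ z * ψ z := by
  have hdbar : ∀ z, dbar (fun z => φ z * ψ z) z = dbar φ z * ψ z + φ z * dbar ψ z := fun z =>
    dbar_mul (hφ.differentiable one_ne_zero z) (hψ.differentiable one_ne_zero z)
  have hzero := integral_dbar_eq_zero (hφ.mul hψ) hsupp.mul_right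
  simp only [hdbar] at hzero
  have hleft : Integrable fun z => dbar φ z * ψ z :=
    ((continuous_dbar hφ).mul hψ.continuous).integrable_of_hasCompactSupport
      (hasCompactSupport_dbar hsupp).mul_right
  have hright : Integrable fun z => φ z * dbar ψ z :=
    (hφ.continuous.mul (continuous_dbar hψ)).integrable_of_hasCompactSupport hsupp.mul_right
  rw [integral_add hleft hright] at hzero
  exact eq_neg_of_add_eq_zero_right hzero

namespace IsCollarCutoff

lemma support_dbar_subset (hη : IsCollarCutoff K C ε η) :
    Function.support (dbar η) ⊆ Metric.cthickening ε K \ K := by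
  intro z hz
  by_contra h
  refine hz ?_
  by_cases hzK : z ∈ K
  · exact (dbar_congr (hη.eventuallyEq_zero z hzK)).trans (dbar_const 0 z)
  · have hfar : z ∉ Metric.cthickening ε K := fun hz => h ⟨hz, hzK⟩
    have hone : η =ᶠ[𝓝 z] fun _ => 1 := by
      filter_upwards [Metric.isClosed_cthickening.isOpen_compl.mem_nhds hfar] with y hy
      exact hη.eq_one y fun h => hy (Metric.thickening_subset_cthickening ε K h)
    exact (dbar_congr hone).trans (dbar_const 1 z)

lemma integrable_mul_dbar (hη : IsCollarCutoff K C ε η) (hS : IsCompact S)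
    (hsub : Metric.cthickening ε K \ K ⊆ S) (hψ : ContinuousOn ψ S) :
    Integrable fun z => ψ z * dbar η z := by
  rw [← integrableOn_iff_integrable_of_support_subset
    ((Function.support_mul_subset_right _ _).trans (hη.support_dbar_subset.trans hsub))]
  exact (hψ.mul (continuous_dbar hη.contDiff).continuousOn).integrableOn_compact hS

lemma norm_integral_mul_dbar_sub_le (hη : IsCollarCutoff K C ε η) (hS : IsCompact S)
    (hsub : Metric.cthickening ε K \ K ⊆ S) (hψ : ContinuousOn ψ S) (hφ : ContinuousOn φ S)
    {e : ℝ} (he : 0 ≤ e) (hφψ : ∀ z ∈ S, ‖ψ z - φ z‖ ≤ e) :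
    ‖(∫ z, ψ z * dbar η z) - ∫ z, φ z * dbar η z‖ ≤ e * C := by
  rw [← integral_sub (hη.integrable_mul_dbar hS hsub hψ) (hη.integrable_mul_dbar hS hsub hφ)]
  have hle : ∀ z, ‖ψ z * dbar η z - φ z * dbar η z‖ ≤ e * ‖dbar η z‖ := fun z => by
    rw [← sub_mul, norm_mul]
    by_cases hz : dbar η z = 0
    · simp [hz]
    · exact mul_le_mul_of_nonneg_right (hφψ z (hsub (hη.support_dbar_subset hz))) (norm_nonneg _)
  refine (norm_integral_le_of_norm_le (hη.integrable_dbar.norm.const_mul e)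
    (ae_of_all _ hle)).trans ?_
  rw [integral_const_mul]
  exact mul_le_mul_of_nonneg_left hη.integral_norm_dbar_le he

end IsCollarCutoff

lemma eventually_isCollarCutoff_eq_one {η : ℝ → ℂ → ℂ} (hK : IsClosed K)
    (hη : ∀ ε > 0, IsCollarCutoff K C ε (η ε)) {z : ℂ} (hz : z ∉ K) :
    ∀ᶠ ε in 𝓝[>] 0, η ε z = 1 := by
  have hfar := Metric.eventually_notMem_thickening_of_infEDist_pos (hK.closure_eq.symm ▸ hz)
  filter_upwards [nhdsWithin_le_nhds hfar, self_mem_nhdsWithin] with ε hε hε0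
  exact (hη ε hε0).eq_one z hε

lemma tendsto_integral_mul_dbar_of_contDiff {η : ℝ → ℂ → ℂ} (hK : IsClosed K)
    (hη : ∀ ε > 0, IsCollarCutoff K C ε (η ε)) (hφ : ContDiff ℝ 1 φ)
    (hsupp : HasCompactSupport φ) :
    Tendsto (fun ε => ∫ z, φ z * dbar (η ε) z) (𝓝[>] 0) (𝓝 (∫ z in K, dbar φ z)) := by
  have hInt := integrable_dbar hφ hsupp
  have hcompl : ∫ z in K, dbar φ z = -∫ z, Kᶜ.indicator (dbar φ) z := by
    rw [integral_indicator hK.measurableSet.compl, eq_neg_iff_add_eq_zero,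
      integral_add_compl hK.measurableSet hInt, integral_dbar_eq_zero hφ hsupp]
  have hparts : (fun ε => ∫ z, φ z * dbar (η ε) z) =ᶠ[𝓝[>] 0]
      fun ε => -∫ z, dbar φ z * η ε z := by
    filter_upwards [self_mem_nhdsWithin] with ε hε
    exact integral_mul_dbar_eq_neg hφ hsupp (hη ε hε).contDiff
  rw [hcompl, tendsto_congr' hparts]
  refine (tendsto_integral_filter_of_dominated_convergence (fun z => ‖dbar φ z‖) ?_ ?_ hInt.norm
    (ae_of_all _ fun z => tendsto_nhds_of_eventually_eq ?_)).neg
  · filter_upwards [self_mem_nhdsWithin] with ε hε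
    exact ((continuous_dbar hφ).mul (hη ε hε).contDiff.continuous).aestronglyMeasurable
  · filter_upwards [self_mem_nhdsWithin] with ε hε
    refine ae_of_all _ fun z => ?_
    rw [norm_mul]
    exact mul_le_of_le_one_right (norm_nonneg _) ((hη ε hε).norm_le_one z)
  · by_cases hz : z ∈ K
    · filter_upwards [self_mem_nhdsWithin] with ε hε
      rw [((hη ε hε).eventuallyEq_zero z hz).self_of_nhds, indicator_of_notMem (not_not.2 hz),
        Pi.zero_apply, mul_zero]
    · filter_upwards [eventually_isCollarCutoff_eq_one hK hη hz] with ε hε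
      rw [hε, indicator_of_mem hz, mul_one]

namespace IsJordanRegion

variable {E : Set ℂ} {γ : ℝ → ℂ} {L : ℝ}

lemma exists_isCollarCutoff (hE : IsJordanRegion E γ L) :
    ∃ (C : ℝ) (η : ℝ → ℂ → ℂ), ∀ ε > 0, IsCollarCutoff E C ε (η ε) := by
  obtain ⟨C, hC⟩ := exists_isCollarCutoff_image_Icc hE.lipschitz hE.length_pos
  have hex : ∀ ε : ℝ, ∃ η, 0 < ε → IsCollarCutoff E C ε η := fun ε => by
    by_cases hε : 0 < ε
    · obtain ⟨η, hη⟩ := hC ε hε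
      rw [← hE.frontier_eq] at hη
      exact (hη.exists_of_frontier hE.isCompact.isClosed hε).imp fun _ h _ => h
    · exact ⟨0, fun h => absurd h hε⟩
  choose η hη using hex
  exact ⟨C, η, hη⟩

/- The uniform bound on `∫ ‖dbar (η ε)‖` carries the limit over from smooth to continuous `ψ`. -/
lemma tendsto_integral_mul_dbar (hE : IsJordanRegion E γ L) {κ : ℂ} (hκ : IsGreenConstant E γ L κ)
    {η : ℝ → ℂ → ℂ} (hη : ∀ ε > 0, IsCollarCutoff E C ε (η ε)) {r : ℝ} (hr : 0 < r)
    (hψ : ContinuousOn ψ (Metric.cthickening r E \ interior E)) :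
    Tendsto (fun ε => ∫ z, ψ z * dbar (η ε) z) (𝓝[>] 0) (𝓝 (κ * contourIntegral γ L ψ)) := by
  have hS : IsCompact (Metric.cthickening r E \ interior E) :=
    hE.isCompact.cthickening.diff isOpen_interior
  have hγS : γ '' Icc 0 L ⊆ Metric.cthickening r E \ interior E := by
    rw [← hE.frontier_eq, hE.isCompact.isClosed.frontier_eq]
    exact sdiff_subset_sdiff_left (Metric.self_subset_cthickening E)
  have hL := hE.length_pos
  rw [Metric.tendsto_nhds]
  intro d hd
  obtain ⟨e, he, hsmall⟩ := exists_pos_mul_lt (half_pos hd) (C + ‖κ‖ * L)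
  obtain ⟨φ, hφ, hsupp, hφψ⟩ := exists_contDiff_hasCompactSupport_norm_sub_lt hS hψ he
  have hlim := tendsto_integral_mul_dbar_of_contDiff hE.isCompact.isClosed hη hφ hsupp
  rw [hκ φ hφ hsupp, Metric.tendsto_nhds] at hlim
  have hcontour : ‖κ * contourIntegral γ L φ - κ * contourIntegral γ L ψ‖ ≤ ‖κ‖ * (e * L) := by
    rw [← mul_sub, norm_mul, ← contourIntegral_sub hL.le hE.lipschitz hφ.continuous.continuousOn
      (hψ.mono hγS)]
    gcongr
    exact norm_contourIntegral_le hL.le hE.lipschitz fun z hz => (hφψ z (hγS hz)).le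
  filter_upwards [hlim (d / 2) (half_pos hd), Ioc_mem_nhdsGT hr] with ε hclose hε
  have harea : ‖(∫ z, ψ z * dbar (η ε) z) - ∫ z, φ z * dbar (η ε) z‖ ≤ e * C :=
    (hη ε hε.1).norm_integral_mul_dbar_sub_le hS
      (sdiff_subset_sdiff (Metric.cthickening_mono hε.2 E) interior_subset) hψ
      hφ.continuous.continuousOn he.le fun z hz => norm_sub_rev (φ z) _ ▸ (hφψ z hz).le
  rw [← dist_eq_norm] at harea hcontour
  calc dist (∫ z, ψ z * dbar (η ε) z) (κ * contourIntegral γ L ψ)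
      ≤ _ := dist_triangle4 _ (∫ z, φ z * dbar (η ε) z) (κ * contourIntegral γ L φ) _
    _ < d := by linarith

end IsJordanRegion

end CollarLimit

/-! ### Pairing holomorphic functions with cutoffs -/

section HolomorphicPairing

variable {Ω : Set ℂ} {F u : ℂ → ℂ}

lemma contDiff_mul_of_tsupport_subset {n : ℕ∞ω} (hΩ : IsOpen Ω) (hF : DifferentiableOn ℂ F Ω)
    (hu : ContDiff ℝ n u) (hsub : tsupport u ⊆ Ω) : ContDiff ℝ n fun z => F z * u z := by
  refine contDiff_iff_contDiffAt.2 fun z => ?_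
  by_cases hz : z ∈ tsupport u
  · have hFz : ContDiffAt ℂ n F z := (hF.analyticAt (hΩ.mem_nhds (hsub hz))).contDiffAt
    exact (hFz.restrict_scalars ℝ).mul hu.contDiffAt
  · refine (contDiffAt_const (c := 0)).congr_of_eventuallyEq ?_
    filter_upwards [notMem_tsupport_iff_eventuallyEq.1 hz] with y hy
    rw [hy, Pi.zero_apply, mul_zero]

lemma integrable_mul_of_tsupport_subset (hΩ : IsOpen Ω) (hF : DifferentiableOn ℂ F Ω)
    (hu : Continuous u) (hsupp : HasCompactSupport u) (hsub : tsupport u ⊆ Ω) :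
    Integrable fun z => F z * u z :=
  (contDiff_mul_of_tsupport_subset hΩ hF (contDiff_zero.2 hu)
    hsub).continuous.integrable_of_hasCompactSupport hsupp.mul_left

lemma fderiv_mul_of_tsupport_subset (hΩ : IsOpen Ω) (hF : DifferentiableOn ℂ F Ω)
    (hu : Differentiable ℝ u) (hsub : tsupport u ⊆ Ω) (z v : ℂ) :
    fderiv ℝ (fun z => F z * u z) z v = v * deriv F z * u z + F z * fderiv ℝ u z v := by
  by_cases hz : z ∈ tsupport u
  · have hFz := hF.differentiableAt (hΩ.mem_nhds (hsub hz))
    have hFv : fderiv ℝ F z v = v * deriv F z := by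
      rw [hFz.fderiv_restrictScalars ℝ, ContinuousLinearMap.coe_restrictScalars',
        fderiv_eq_smul_deriv, smul_eq_mul]
    rw [fderiv_fun_mul (hFz.restrictScalars ℝ) (hu z)]
    simp only [add_apply, smul_apply, smul_eq_mul, hFv]
    ring
  · have hzero := notMem_tsupport_iff_eventuallyEq.1 hz
    have hprod : (fun z => F z * u z) =ᶠ[𝓝 z] 0 := by
      filter_upwards [hzero] with y hy
      rw [hy, Pi.zero_apply, mul_zero]
    simp [hprod.fderiv_eq, hzero.fderiv_eq, hzero.self_of_nhds]

lemma integral_mul_dbar_eq_zero (hΩ : IsOpen Ω) (hF : DifferentiableOn ℂ F Ω)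
    (hu : ContDiff ℝ 1 u) (hsupp : HasCompactSupport u) (hsub : tsupport u ⊆ Ω) :
    ∫ z, F z * dbar u z = 0 := by
  rw [← integral_dbar_eq_zero (contDiff_mul_of_tsupport_subset hΩ hF hu hsub) hsupp.mul_left]
  congr with z
  simp only [dbar, fderiv_mul_of_tsupport_subset hΩ hF (hu.differentiable one_ne_zero) hsub]
  linear_combination -(deriv F z * u z) * Complex.I_mul_I

lemma integral_deriv_mul_eq_neg (hΩ : IsOpen Ω) (hF : DifferentiableOn ℂ F Ω)
    (hu : ContDiff ℝ 1 u) (hsupp : HasCompactSupport u) (hsub : tsupport u ⊆ Ω) :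
    ∫ z, deriv F z * u z = -∫ z, F z * fderiv ℝ u z 1 := by
  have hzero := integral_fderiv_apply_eq_zero (contDiff_mul_of_tsupport_subset hΩ hF hu hsub)
    hsupp.mul_left 1
  simp only [fderiv_mul_of_tsupport_subset hΩ hF (hu.differentiable one_ne_zero) hsub,
    one_mul] at hzero
  have hleft := integrable_mul_of_tsupport_subset hΩ (hF.deriv hΩ) hu.continuous hsupp hsub
  have hright := integrable_mul_of_tsupport_subset hΩ hF
    ((hu.continuous_fderiv one_ne_zero).clm_apply continuous_const) (hsupp.fderiv_apply ℝ 1)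
    ((tsupport_fderiv_apply_subset ℝ 1).trans hsub)
  rw [integral_add hleft hright] at hzero
  exact eq_neg_of_add_eq_zero_left hzero

lemma contDiff_dbar (hu : ContDiff ℝ ∞ u) : ContDiff ℝ ∞ (dbar u) := by
  have hfd : ContDiff ℝ ∞ (fderiv ℝ u) := hu.fderiv_right (m := ∞) (by simp)
  exact (hfd.clm_apply contDiff_const).add (contDiff_const.mul (hfd.clm_apply contDiff_const))

lemma fderiv_dbar_one (hu : ContDiff ℝ ∞ u) (z : ℂ) :
    fderiv ℝ (dbar u) z 1 = dbar (fun z => fderiv ℝ u z 1) z := by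
  have hfd : ContDiff ℝ ∞ (fderiv ℝ u) := hu.fderiv_right (m := ∞) (by simp)
  have hdiff : DifferentiableAt ℝ (fderiv ℝ u) z := hfd.differentiable (by simp) z
  have happly : ∀ v w, fderiv ℝ (fun z => fderiv ℝ u z v) z w = fderiv ℝ (fderiv ℝ u) z w v :=
    fun v w => by rw [fderiv_clm_apply hdiff (by fun_prop)]; simp
  have hsymm := hu.contDiffAt.isSymmSndFDerivAt (x := z)
    (by rw [minSmoothness_of_isRCLikeNormedField]; exact WithTop.coe_le_coe.2 le_top) Complex.I 1
  have hd : ∀ v, DifferentiableAt ℝ (fun z => fderiv ℝ u z v) z := fun v => by fun_prop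
  unfold dbar
  rw [fderiv_fun_add (hd 1) ((hd Complex.I).const_mul _), fderiv_const_mul (hd Complex.I)]
  simp only [add_apply, smul_apply, smul_eq_mul, happly, hsymm]

end HolomorphicPairing

/-- `χ` is a test function on `Ω ∪ E` which equals `1` within distance `r` of `E`, so that its
derivatives are supported in `Ω`. -/
structure IsPlateau (Ω E : Set ℂ) (r : ℝ) (χ : ℂ → ℂ) : Prop where
  pos : 0 < r
  contDiff : ContDiff ℝ ∞ χ
  hasCompactSupport : HasCompactSupport χ
  tsupport_subset : tsupport χ ⊆ Ω ∪ E
  eqOn_one : EqOn χ 1 (Metric.cthickening r E)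

lemma exists_isPlateau {Ω E : Set ℂ} (hE : IsCompact E) (hunion : IsOpen (Ω ∪ E)) :
    ∃ r χ, IsPlateau Ω E r χ := by
  obtain ⟨r, hr, χ, hχ, hsupp, hsub, hone⟩ :=
    exists_contDiff_eqOn_cthickening_one hE hunion subset_union_right
  exact ⟨r, χ, hr, hχ, hsupp, hsub, hone⟩

namespace IsPlateau

variable {Ω E : Set ℂ} {r C ε : ℝ} {χ η F : ℂ → ℂ}

lemma contDiff_one (hχ : IsPlateau Ω E r χ) : ContDiff ℝ 1 χ :=
  hχ.contDiff.of_le (mod_cast le_top)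

lemma eventuallyEq_one (hχ : IsPlateau Ω E r χ) {z : ℂ} (hz : z ∈ E) : χ =ᶠ[𝓝 z] 1 := by
  filter_upwards [Metric.isOpen_thickening.mem_nhds
    (Metric.self_subset_thickening hχ.pos E hz)] with y hy
  exact hχ.eqOn_one (Metric.thickening_subset_cthickening _ _ hy)

protected lemma tsupport_fderiv_subset (hχ : IsPlateau Ω E r χ) : tsupport (fderiv ℝ χ) ⊆ Ω := by
  intro z hz
  refine (hχ.tsupport_subset (tsupport_fderiv_subset ℝ hz)).resolve_right fun hzE => ?_
  refine notMem_tsupport_iff_eventuallyEq.2 ?_ hz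
  filter_upwards [(hχ.eventuallyEq_one hzE).fderiv (𝕜 := ℝ)] with y hy
  rw [hy]
  exact fderiv_const_apply (𝕜 := ℝ) (1 : ℂ)

protected lemma tsupport_dbar_subset (hχ : IsPlateau Ω E r χ) : tsupport (dbar χ) ⊆ Ω :=
  (tsupport_dbar_subset_tsupport_fderiv χ).trans hχ.tsupport_fderiv_subset

lemma cthickening_subset (hχ : IsPlateau Ω E r χ) : Metric.cthickening r E ⊆ Ω ∪ E :=
  fun _ hz => hχ.tsupport_subset (subset_tsupport χ (by simp [hχ.eqOn_one hz]))

lemma continuous_mul_dbar (hχ : IsPlateau Ω E r χ) (hΩ : IsOpen Ω) (hF : DifferentiableOn ℂ F Ω) :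
    Continuous fun z => F z * dbar χ z :=
  (contDiff_mul_of_tsupport_subset hΩ hF (contDiff_dbar hχ.contDiff)
    hχ.tsupport_dbar_subset).continuous

lemma hasCompactSupport_mul_dbar (hχ : IsPlateau Ω E r χ) (F : ℂ → ℂ) :
    HasCompactSupport fun z => F z * dbar χ z :=
  (hasCompactSupport_dbar hχ.hasCompactSupport).mul_left

lemma integrable_mul_dbar (hχ : IsPlateau Ω E r χ) (hΩ : IsOpen Ω) (hF : DifferentiableOn ℂ F Ω) :
    Integrable fun z => F z * dbar χ z :=
  (hχ.continuous_mul_dbar hΩ hF).integrable_of_hasCompactSupport (hχ.hasCompactSupport_mul_dbar F)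

lemma integral_deriv_mul_dbar_eq_zero (hχ : IsPlateau Ω E r χ) (hΩ : IsOpen Ω)
    (hF : DifferentiableOn ℂ F Ω) : ∫ z, deriv F z * dbar χ z = 0 := by
  have hfd : ContDiff ℝ 1 fun z => fderiv ℝ χ z 1 :=
    (hχ.contDiff.fderiv_right (m := 1) (WithTop.coe_le_coe.2 le_top)).clm_apply contDiff_const
  have hsub : tsupport (fun z => fderiv ℝ χ z 1) ⊆ Ω :=
    (closure_mono (Function.support_comp_subset (g := fun A : ℂ →L[ℝ] ℂ => A 1) rfl _)).trans
      hχ.tsupport_fderiv_subset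
  rw [integral_deriv_mul_eq_neg hΩ hF ((contDiff_dbar hχ.contDiff).of_le (mod_cast le_top))
    (hasCompactSupport_dbar hχ.hasCompactSupport) hχ.tsupport_dbar_subset]
  simp only [fderiv_dbar_one hχ.contDiff]
  rw [integral_mul_dbar_eq_zero hΩ hF hfd (hχ.hasCompactSupport.fderiv_apply ℝ 1) hsub, neg_zero]

lemma mul_collarCutoff (hχ : IsPlateau Ω E r χ) (hη : IsCollarCutoff E C ε η) (hε : ε ≤ r) :
    (fun z => χ z * η z) = fun z => χ z + η z - 1 := by
  ext z
  have hprod : (χ z - 1) * (η z - 1) = 0 := by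
    by_cases hz : z ∈ Metric.thickening ε E
    · have hχz : χ z = 1 := hχ.eqOn_one
        (Metric.cthickening_mono hε E (Metric.thickening_subset_cthickening ε E hz))
      rw [hχz, sub_self, zero_mul]
    · rw [hη.eq_one z hz, sub_self, mul_zero]
  linear_combination hprod

/- The product `χ * η` is a test function on `Ω`, and it equals `χ + η - 1`. -/
lemma integral_mul_dbar_eq_neg_collar (hχ : IsPlateau Ω E r χ) (hη : IsCollarCutoff E C ε η)
    (hε : ε ≤ r) (hΩ : IsOpen Ω) (hF : DifferentiableOn ℂ F Ω) :
    ∫ z, F z * dbar χ z = -∫ z, F z * dbar η z := by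
  have hsub : tsupport (fun z => χ z * η z) ⊆ Ω := fun z hz =>
    (hχ.tsupport_subset (tsupport_mul_subset_left hz)).resolve_right fun hzE =>
      notMem_tsupport_iff_eventuallyEq.2 (hη.eventuallyEq_zero z hzE)
        (tsupport_mul_subset_right hz)
  have hu : ContDiff ℝ 1 fun z => χ z * η z := hχ.contDiff_one.mul hη.contDiff
  have hzero := integral_mul_dbar_eq_zero hΩ hF hu hχ.hasCompactSupport.mul_right hsub
  have hdbar : ∀ z, dbar (fun z => χ z * η z) z = dbar χ z + dbar η z := fun z => by
    have hdχ := hχ.contDiff_one.differentiable one_ne_zero z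
    have hdη := hη.contDiff.differentiable one_ne_zero z
    rw [hχ.mul_collarCutoff hη hε, dbar, fderiv_sub_const, fderiv_fun_add hdχ hdη]
    simp only [add_apply, dbar]
    ring
  have hInt := integrable_mul_of_tsupport_subset hΩ hF (continuous_dbar hu)
    (hasCompactSupport_dbar hχ.hasCompactSupport.mul_right) ((tsupport_dbar_subset _).trans hsub)
  calc ∫ z, F z * dbar χ z = -((∫ z, F z * dbar (fun z => χ z * η z) z) - ∫ z, F z * dbar χ z) := by
        rw [hzero, zero_sub, neg_neg]
    _ = -∫ z, F z * dbar η z := by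
        rw [← integral_sub hInt (hχ.integrable_mul_dbar hΩ hF)]
        simp only [hdbar, mul_add, add_sub_cancel_left]

variable {γ : ℝ → ℂ} {L : ℝ} {κ : ℂ}

lemma integral_mul_dbar_eq_contourIntegral (hχ : IsPlateau Ω E r χ) (hE : IsJordanRegion E γ L)
    (hκ : IsGreenConstant E γ L κ) (hΩ : IsOpen Ω) (hF : DifferentiableOn ℂ F Ω)
    (hFc : ContinuousOn F (Ω ∪ γ '' Icc 0 L)) :
    ∫ z, F z * dbar χ z = -(κ * contourIntegral γ L F) := by
  obtain ⟨C, η, hη⟩ := hE.exists_isCollarCutoff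
  have hcollar : Metric.cthickening r E \ interior E ⊆ Ω ∪ γ '' Icc 0 L := by
    rw [← hE.frontier_eq, hE.isCompact.isClosed.frontier_eq]
    exact fun z hz => (hχ.cthickening_subset hz.1).imp_right fun hzE => ⟨hzE, hz.2⟩
  have hlim := hE.tendsto_integral_mul_dbar hκ hη hχ.pos (hFc.mono hcollar)
  refine tendsto_nhds_unique (tendsto_const_nhds.congr' ?_) hlim.neg
  filter_upwards [Ioc_mem_nhdsGT hχ.pos] with ε hε
  exact hχ.integral_mul_dbar_eq_neg_collar (hη ε hε.1) hε.2 hΩ hF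

lemma integral_dslope_mul_dbar (hχ : IsPlateau Ω E r χ) (hΩ : IsOpen Ω)
    (hF : DifferentiableOn ℂ F Ω) (z : ℂ) :
    ∫ ζ, dslope F z ζ * dbar χ ζ =
      (∫ ζ, F ζ * dbar χ ζ / (ζ - z)) + 2 * Real.pi * (F z * χ z) := by
  have hFint := integrable_div_sub_of_hasCompactSupport (hχ.continuous_mul_dbar hΩ hF)
    (hχ.hasCompactSupport_mul_dbar F) z
  have hχint := integrable_div_sub_of_hasCompactSupport (continuous_dbar hχ.contDiff_one)
    (hasCompactSupport_dbar hχ.hasCompactSupport) z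
  have hae : (fun ζ => dslope F z ζ * dbar χ ζ) =ᵐ[volume]
      fun ζ => F ζ * dbar χ ζ / (ζ - z) - F z * (dbar χ ζ / (ζ - z)) := by
    filter_upwards [Measure.ae_ne volume z] with ζ hζ
    rw [dslope_of_ne F hζ, slope_def_field]
    ring
  rw [integral_congr_ae hae, integral_sub hFint (hχint.const_mul _), integral_const_mul,
    integral_dbar_div_sub hχ.contDiff_one hχ.hasCompactSupport]
  ring

/- Cauchy's formula in `Ω`, obtained from Green's formula for `dslope F z`. -/
lemma neg_two_pi_mul_eq_integral_add_contourIntegral (hχ : IsPlateau Ω E r χ)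
    (hE : IsJordanRegion E γ L) (hκ : IsGreenConstant E γ L κ) (hΩ : IsOpen Ω)
    (hdisj : Disjoint Ω E) (hF : DifferentiableOn ℂ F Ω)
    (hFc : ContinuousOn F (Ω ∪ γ '' Icc 0 L)) {z : ℂ} (hz : z ∈ Ω) :
    -(2 * Real.pi) * (F z * χ z) = (∫ ζ, F ζ * dbar χ ζ / (ζ - z)) +
      κ * contourIntegral γ L fun ζ => F ζ / (ζ - z) := by
  have hzE : z ∉ E := disjoint_left.1 hdisj hz
  have hslope : DifferentiableOn ℂ (dslope F z) Ω :=
    (Complex.differentiableOn_dslope (hΩ.mem_nhds hz)).2 hF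
  have hslopec : ContinuousOn (dslope F z) (Ω ∪ γ '' Icc 0 L) :=
    (continuousOn_dslope (mem_of_superset (hΩ.mem_nhds hz) subset_union_left)).2
      ⟨hFc, hF.differentiableAt (hΩ.mem_nhds hz)⟩
  have hgreen := hχ.integral_mul_dbar_eq_contourIntegral hE hκ hΩ hslope hslopec
  rw [hχ.integral_dslope_mul_dbar hΩ hF,
    hE.contourIntegral_dslope (hFc.mono subset_union_right) hzE] at hgreen
  linear_combination -hgreen

end IsPlateau

/-! ### Primitives of all orders, vanishing moments and extension across the hole -/

section PolynomialTimesIteratedDeriv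

variable {Ω : Set ℂ} {φ : ℂ → ℂ}

lemma differentiableOn_iteratedDeriv (hΩ : IsOpen Ω) (hφ : DifferentiableOn ℂ φ Ω) (n : ℕ) :
    DifferentiableOn ℂ (iteratedDeriv n φ) Ω := by
  induction n with
  | zero => rwa [iteratedDeriv_zero]
  | succ n ih => rw [iteratedDeriv_succ]; exact ih.deriv hΩ

/- Repeated integration by parts: each step trades one derivative of `φ` for one of `P`. -/
lemma exists_deriv_eq_eval_mul_iteratedDeriv (hΩ : IsOpen Ω) (hφ : DifferentiableOn ℂ φ Ω) {n : ℕ}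
    {P : ℂ[X]} (hP : P.natDegree ≤ n) :
    ∃ F : ℂ → ℂ, DifferentiableOn ℂ F Ω ∧
      ∀ z ∈ Ω, deriv F z = P.eval z * iteratedDeriv (n + 1) φ z := by
  induction n generalizing P with
  | zero =>
    have hP' : P.derivative = 0 := derivative_of_natDegree_zero (Nat.le_zero.1 hP)
    refine ⟨fun z => P.eval z * φ z, P.differentiable.differentiableOn.mul hφ, fun z hz => ?_⟩
    rw [deriv_fun_mul P.differentiableAt (hφ.differentiableAt (hΩ.mem_nhds hz)), P.deriv, hP',
      eval_zero, zero_mul, zero_add, zero_add, iteratedDeriv_one]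
  | succ n ih =>
    obtain ⟨F, hF, hF'⟩ := ih ((natDegree_derivative_le P).trans (Nat.sub_le_of_le_add hP))
    have hiter := differentiableOn_iteratedDeriv hΩ hφ (n + 1)
    refine ⟨fun z => P.eval z * iteratedDeriv (n + 1) φ z - F z,
      (P.differentiable.differentiableOn.mul hiter).sub hF, fun z hz => ?_⟩
    have hiterz := hiter.differentiableAt (hΩ.mem_nhds hz)
    rw [deriv_fun_sub (P.differentiableAt.fun_mul hiterz) (hF.differentiableAt (hΩ.mem_nhds hz)),
      deriv_fun_mul P.differentiableAt hiterz, hF' z hz, P.deriv, add_sub_cancel_left,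
      iteratedDeriv_succ (n := n + 1)]

end PolynomialTimesIteratedDeriv

section CauchyTransform

variable {T : ℂ → ℂ}

lemma half_le_norm_sub_of_ball_subset {z₀ z ζ : ℂ} {d : ℝ}
    (hball : Metric.ball z₀ d ⊆ (tsupport T)ᶜ) (hz : z ∈ Metric.ball z₀ (d / 2)) (hζ : T ζ ≠ 0) :
    d / 2 ≤ ‖ζ - z‖ := by
  have hfar : d ≤ dist ζ z₀ := not_lt.1 fun h => hball h (subset_tsupport T hζ)
  have htri := dist_triangle ζ z z₀
  rw [Metric.mem_ball] at hz
  rw [← dist_eq_norm]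
  linarith

lemma hasDerivAt_div_sub (c : ℂ) {ζ z : ℂ} (h : ζ ≠ z) :
    HasDerivAt (fun z => c / (ζ - z)) (c / (ζ - z) ^ 2) z := by
  have hquot := (hasDerivAt_const z c).fun_div ((hasDerivAt_id z).const_sub ζ) (sub_ne_zero.2 h)
  simpa using hquot

lemma differentiableOn_integral_div_sub (hT : Continuous T) (hsupp : HasCompactSupport T) :
    DifferentiableOn ℂ (fun z => ∫ ζ, T ζ / (ζ - z)) (tsupport T)ᶜ := by
  intro z₀ hz₀
  obtain ⟨d, hd, hball⟩ := Metric.isOpen_iff.1 (isClosed_tsupport T).isOpen_compl z₀ hz₀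
  have hmeas : ∀ z, AEStronglyMeasurable fun ζ => T ζ / (ζ - z) := fun z =>
    (integrable_div_sub_of_hasCompactSupport hT hsupp z).aestronglyMeasurable
  have hmeas' : Measurable fun ζ => T ζ / (ζ - z₀) ^ 2 := hT.measurable.div (by fun_prop)
  have hbound : ∀ ζ, ∀ z ∈ Metric.ball z₀ (d / 2),
      ‖T ζ / (ζ - z) ^ 2‖ ≤ ‖T ζ‖ / (d / 2) ^ 2 := fun ζ z hz => by
    by_cases hζ : T ζ = 0
    · simp [hζ]
    · have := half_le_norm_sub_of_ball_subset hball hz hζ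
      rw [norm_div, norm_pow]
      gcongr
  have hderiv : ∀ ζ, ∀ z ∈ Metric.ball z₀ (d / 2),
      HasDerivAt (fun z => T ζ / (ζ - z)) (T ζ / (ζ - z) ^ 2) z := fun ζ z hz => by
    by_cases hζ : T ζ = 0
    · simpa only [hζ, zero_div] using hasDerivAt_const z (0 : ℂ)
    · have hfar := half_le_norm_sub_of_ball_subset hball hz hζ
      exact hasDerivAt_div_sub _ (sub_ne_zero.1 (norm_pos_iff.1 ((half_pos hd).trans_le hfar)))
  exact (hasDerivAt_integral_of_dominated_loc_of_deriv_le (Metric.ball_mem_nhds z₀ (half_pos hd))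
    (Eventually.of_forall hmeas) (integrable_div_sub_of_hasCompactSupport hT hsupp z₀)
    hmeas'.aestronglyMeasurable (ae_of_all _ hbound)
    ((hT.integrable_of_hasCompactSupport hsupp).norm.div_const _)
    (ae_of_all _ hderiv)).2.differentiableAt.differentiableWithinAt

end CauchyTransform

lemma exists_differentiableOn_union_eqOn {Ω E : Set ℂ} {f h : ℂ → ℂ} (hΩ : IsOpen Ω)
    (hf : DifferentiableOn ℂ f Ω) (hh : ∀ z ∈ E, z ∉ Ω → DifferentiableAt ℂ h z)
    (heq : ∀ z ∈ E, ∀ᶠ y in 𝓝 z, y ∈ Ω → h y = f y) :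
    ∃ g : ℂ → ℂ, DifferentiableOn ℂ g (Ω ∪ E) ∧ EqOn g f Ω := by
  classical
  refine ⟨fun z => if z ∈ Ω then f z else h z, fun z hz => ?_, fun z hz => if_pos hz⟩
  refine DifferentiableAt.differentiableWithinAt ?_
  by_cases hzΩ : z ∈ Ω
  · refine (hf.differentiableAt (hΩ.mem_nhds hzΩ)).congr_of_eventuallyEq ?_
    filter_upwards [hΩ.mem_nhds hzΩ] with y hy using if_pos hy
  · have hzE : z ∈ E := hz.resolve_left hzΩ
    refine (hh z hzE hzΩ).congr_of_eventuallyEq ?_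
    filter_upwards [heq z hzE] with y hy
    split_ifs with hyΩ
    · exact (hy hyΩ).symm
    · rfl

namespace IsJordanRegion

variable {Ω E : Set ℂ} {γ : ℝ → ℂ} {L : ℝ} {f : ℂ → ℂ}

lemma contourIntegral_eq_zero_of_deriv_eq (hE : IsJordanRegion E γ L) (hΩ : IsOpen Ω)
    (hunion : IsOpen (Ω ∪ E)) (hfc : ContinuousOn f (Ω ∪ γ '' Icc 0 L)) {F : ℂ → ℂ}
    (hF : DifferentiableOn ℂ F Ω) (hF' : ∀ z ∈ Ω, deriv F z = f z) :
    contourIntegral γ L f = 0 := by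
  obtain ⟨κ, hκ0, hκ⟩ := hE.exists_isGreenConstant
  obtain ⟨r, χ, hχ⟩ := exists_isPlateau hE.isCompact hunion
  have hf : DifferentiableOn ℂ f Ω := (hF.deriv hΩ).congr fun z hz => (hF' z hz).symm
  have heq : ∀ z, deriv F z * dbar χ z = f z * dbar χ z := fun z => by
    by_cases hz : z ∈ Ω
    · rw [hF' z hz]
    · rw [image_eq_zero_of_notMem_tsupport fun h => hz (hχ.tsupport_dbar_subset h), mul_zero,
        mul_zero]
  have hgreen := hχ.integral_mul_dbar_eq_contourIntegral hE hκ hΩ hf hfc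
  simp only [← heq, hχ.integral_deriv_mul_dbar_eq_zero hΩ hF] at hgreen
  exact (mul_eq_zero.1 (neg_eq_zero.1 hgreen.symm)).resolve_left hκ0

lemma contourIntegral_polynomial_mul_eq_zero (hE : IsJordanRegion E γ L) (hΩ : IsOpen Ω)
    (hunion : IsOpen (Ω ∪ E)) (hfc : ContinuousOn f (Ω ∪ γ '' Icc 0 L))
    (hprim : ∀ n : ℕ, 1 ≤ n →
      ∃ φ : ℂ → ℂ, DifferentiableOn ℂ φ Ω ∧ ∀ z ∈ Ω, iteratedDeriv n φ z = f z)
    (P : ℂ[X]) : contourIntegral γ L (fun z => P.eval z * f z) = 0 := by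
  obtain ⟨φ, hφ, hφf⟩ := hprim (P.natDegree + 1) (Nat.le_add_left 1 _)
  obtain ⟨F, hF, hF'⟩ := exists_deriv_eq_eval_mul_iteratedDeriv hΩ hφ (le_refl P.natDegree)
  exact hE.contourIntegral_eq_zero_of_deriv_eq hΩ hunion (P.continuous.continuousOn.mul hfc) hF
    fun z hz => by rw [hF' z hz, hφf z hz]

/- The extension is the Cauchy transform of `f * dbar χ`: by Cauchy's formula it equals `f * χ` on
`Ω` once the integral over `γ` drops out, and `χ = 1` near `E`. -/
lemma exists_extension_of_moments_eq_zero (hE : IsJordanRegion E γ L) (hΩ : IsOpen Ω)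
    (hdisj : Disjoint Ω E) (hunion : IsOpen (Ω ∪ E)) (hf : DifferentiableOn ℂ f Ω)
    (hfc : ContinuousOn f (Ω ∪ γ '' Icc 0 L))
    (hmoments : ∀ P : ℂ[X], contourIntegral γ L (fun z => P.eval z * f z) = 0) :
    ∃ g : ℂ → ℂ, DifferentiableOn ℂ g (Ω ∪ E) ∧ EqOn g f Ω := by
  obtain ⟨κ, -, hκ⟩ := hE.exists_isGreenConstant
  obtain ⟨r, χ, hχ⟩ := exists_isPlateau hE.isCompact hunion
  have htransform := differentiableOn_integral_div_sub (hχ.continuous_mul_dbar hΩ hf)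
    (hχ.hasCompactSupport_mul_dbar f)
  have hpi : -(2 * (Real.pi : ℂ)) ≠ 0 := by simp [Real.pi_ne_zero]
  have hcauchy : ∀ z ∈ Ω, (∫ ζ, f ζ * dbar χ ζ / (ζ - z)) = -(2 * Real.pi) * (f z * χ z) :=
    fun z hz => by
      rw [hχ.neg_two_pi_mul_eq_integral_add_contourIntegral hE hκ hΩ hdisj hf hfc hz,
        hE.contourIntegral_div_sub_eq_zero (hfc.mono subset_union_right) hmoments
          (disjoint_left.1 hdisj hz), mul_zero, add_zero]
  refine exists_differentiableOn_union_eqOn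
    (h := fun z => (-(2 * (Real.pi : ℂ)))⁻¹ * ∫ ζ, f ζ * dbar χ ζ / (ζ - z)) hΩ hf
    (fun z _ hzΩ => ?_) fun z hz => ?_
  · have hzsupp : z ∉ tsupport fun z => f z * dbar χ z := fun hz =>
      hzΩ (hχ.tsupport_dbar_subset (tsupport_mul_subset_right hz))
    exact (htransform.differentiableAt
      ((isClosed_tsupport _).isOpen_compl.mem_nhds hzsupp)).const_mul _
  · filter_upwards [hχ.eventuallyEq_one hz] with y hy hyΩ
    rw [hcauchy y hyΩ, inv_mul_cancel_left₀ hpi, hy, Pi.one_apply, mul_one]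

end IsJordanRegion

/-! ### Runge approximation and primitives -/

section Runge

variable {K G : Set ℂ} {T g : ℂ → ℂ} {ε : ℝ}

lemma continuous_div_sub_of_disjoint_tsupport (hT : Continuous T)
    (hdisj : Disjoint (tsupport T) K) : Continuous fun p : ℂ × K => T p.1 / (p.1 - p.2) := by
  refine continuous_iff_continuousAt.2 fun ⟨ζ, z⟩ => ?_
  by_cases hζ : ζ ∈ tsupport T
  · have hne : ζ - z ≠ 0 := sub_ne_zero.2 (hdisj.ne_of_mem hζ z.2)
    exact ContinuousAt.div (by fun_prop) (by fun_prop) hne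
  · refine (continuousAt_const (y := (0 : ℂ))).congr ?_
    filter_upwards [continuousAt_fst.eventually (notMem_tsupport_iff_eventuallyEq.1 hζ)] with p hp
    rw [hp, Pi.zero_apply, zero_div]

lemma div_sub_mem_closure_polynomialFunctions [CompactSpace K] {ζ c : ℂ} (hζ : ζ ∉ K)
    (hunb : ¬ Bornology.IsBounded (connectedComponentIn Kᶜ ζ)) {q : C(K, ℂ)}
    (hq : ∀ z : K, q z = c / (ζ - z)) : q ∈ (polynomialFunctions K).topologicalClosure := by
  have hcont : Continuous fun z : K => 1 / ((z : ℂ) - ζ) :=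
    continuous_const.div (by fun_prop) fun z => sub_ne_zero.2 (ne_of_mem_of_not_mem z.2 hζ)
  have hpole := one_div_sub_mem_closure_polynomialFunctions hζ hunb (g := ⟨_, hcont⟩) fun _ => rfl
  have hsmul : q = (-c) • (⟨_, hcont⟩ : C(K, ℂ)) := by
    ext z
    rw [hq, ← neg_sub (z : ℂ) ζ, ContinuousMap.smul_apply, ContinuousMap.coe_mk, smul_eq_mul,
      div_neg, mul_one_div, neg_div]
  exact hsmul ▸ Subalgebra.smul_mem _ hpole _

lemma integral_mem_submodule {α V : Type*} [MeasurableSpace α] {μ : Measure α}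
    [NormedAddCommGroup V] [NormedSpace ℝ V] [CompleteSpace V] (S : Submodule ℝ V)
    (hS : IsClosed (S : Set V)) {φ : α → V} (hφ : Integrable φ μ) (hmem : ∀ x, φ x ∈ S) :
    ∫ x, φ x ∂μ ∈ S := by
  have := hS
  have hquot := S.mkQL.integral_comp_comm hφ
  simp only [Submodule.mkQL_apply, Submodule.mkQ_apply,
    (Submodule.Quotient.mk_eq_zero S).2 (hmem _), integral_zero] at hquot
  exact (Submodule.Quotient.mk_eq_zero S).1 hquot.symm

lemma exists_polynomial_norm_integral_div_sub_lt (hK : IsCompact K)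
    (hunb : ∀ z ∉ K, ¬ Bornology.IsBounded (connectedComponentIn Kᶜ z)) (hT : Continuous T)
    (hsupp : HasCompactSupport T) (hdisj : Disjoint (tsupport T) K) (hε : 0 < ε) :
    ∃ P : ℂ[X], ∀ z ∈ K, ‖(∫ ζ, T ζ / (ζ - z)) - P.eval z‖ < ε := by
  have : CompactSpace K := isCompact_iff_compactSpace.1 hK
  let Φ : C(ℂ, C(K, ℂ)) :=
    ContinuousMap.curry ⟨_, continuous_div_sub_of_disjoint_tsupport hT hdisj⟩
  have hΦ : ∀ ζ (z : K), Φ ζ z = T ζ / (ζ - z) := fun _ _ => rfl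
  have hΦzero : ∀ ζ, T ζ = 0 → Φ ζ = 0 := fun ζ hζ => by ext z; simp [hΦ, hζ]
  have hΦint : Integrable Φ := Φ.continuous.integrable_of_hasCompactSupport
    (hsupp.mono fun ζ hζ hTζ => hζ (hΦzero ζ hTζ))
  let S := (polynomialFunctions K).topologicalClosure
  have hmem : ∀ ζ, Φ ζ ∈ S := fun ζ => by
    by_cases hζ : T ζ = 0
    · exact hΦzero ζ hζ ▸ S.zero_mem
    · have hζK : ζ ∉ K := disjoint_left.1 hdisj (subset_tsupport T hζ)
      exact div_sub_mem_closure_polynomialFunctions hζK (hunb ζ hζK) (hΦ ζ)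
  obtain ⟨P, hP⟩ := exists_polynomial_norm_sub_lt_of_mem_closure
    (integral_mem_submodule ((Subalgebra.toSubmodule S).restrictScalars ℝ)
      (polynomialFunctions K).isClosed_topologicalClosure hΦint hmem) hε
  refine ⟨P, fun z hz => ?_⟩
  have hPz := hP ⟨z, hz⟩
  rwa [ContinuousMap.integral_apply hΦint] at hPz

lemma exists_polynomial_norm_sub_lt_of_differentiableOn (hK : IsCompact K)
    (hunb : ∀ z ∉ K, ¬ Bornology.IsBounded (connectedComponentIn Kᶜ z)) (hG : IsOpen G)
    (hKG : K ⊆ G) (hg : DifferentiableOn ℂ g G) (hε : 0 < ε) :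
    ∃ P : ℂ[X], ∀ z ∈ K, ‖g z - P.eval z‖ < ε := by
  have hGK : G ∪ K = G := union_eq_left.2 hKG
  obtain ⟨r, χ, hχ⟩ := exists_isPlateau hK (hGK.symm ▸ hG)
  have hsub : tsupport χ ⊆ G := hGK ▸ hχ.tsupport_subset
  have hgχ : ContDiff ℝ 1 fun z => g z * χ z :=
    contDiff_mul_of_tsupport_subset hG hg hχ.contDiff_one hsub
  have hgχsupp : HasCompactSupport fun z => g z * χ z := hχ.hasCompactSupport.mul_left
  have hdisj : Disjoint (tsupport (dbar fun z => g z * χ z)) K := disjoint_right.2 fun z hz => by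
    rw [notMem_tsupport_iff_eventuallyEq]
    filter_upwards [(hχ.eventuallyEq_one hz).eventuallyEq_nhds, hG.mem_nhds (hKG hz)] with y hy hyG
    have hyg : (fun z => g z * χ z) =ᶠ[𝓝 y] g := by
      filter_upwards [hy] with x hx
      rw [hx, Pi.one_apply, mul_one]
    rw [dbar_congr hyg, dbar_eq_zero (hg.differentiableAt (hG.mem_nhds hyG)), Pi.zero_apply]
  have hpi : -(2 * (Real.pi : ℂ)) ≠ 0 := by simp [Real.pi_ne_zero]
  have hpinorm : 0 < ‖-(2 * (Real.pi : ℂ))‖ := norm_pos_iff.2 hpi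
  obtain ⟨P, hP⟩ := exists_polynomial_norm_integral_div_sub_lt hK hunb (continuous_dbar hgχ)
    (hasCompactSupport_dbar hgχsupp) hdisj (mul_pos hpinorm hε)
  refine ⟨C (-(2 * (Real.pi : ℂ)))⁻¹ * P, fun z hz => lt_of_mul_lt_mul_left ?_ hpinorm.le⟩
  have hPz := hP z hz
  rw [integral_dbar_div_sub hgχ hgχsupp, (hχ.eventuallyEq_one hz).self_of_nhds, Pi.one_apply,
    mul_one] at hPz
  rwa [← norm_mul, eval_mul, eval_C, mul_sub, mul_inv_cancel_left₀ hpi]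

end Runge

/-- The `n`-th set of the standard compact exhaustion of an open set `G`: the points of norm at
most `n` whose distance to the complement of `G` is at least `1 / (n + 1)`. -/
def innerCompact (G : Set ℂ) (n : ℕ) : Set ℂ :=
  {z | ‖z‖ ≤ n ∧ ∀ w ∉ G, 1 / ((n : ℝ) + 1) ≤ dist z w}

section InnerCompact

variable {G K : Set ℂ} {z : ℂ}

lemma innerCompact_subset (G : Set ℂ) (n : ℕ) : innerCompact G n ⊆ G := by
  intro z hz
  by_contra hzG
  have hle := hz.2 z hzG
  rw [dist_self] at hle
  exact hle.not_gt (by positivity)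

lemma isCompact_innerCompact (G : Set ℂ) (n : ℕ) : IsCompact (innerCompact G n) := by
  refine (isCompact_closedBall (0 : ℂ) n).of_isClosed_subset ?_ fun z hz => by simpa using hz.1
  simp only [innerCompact, ofPred_and, ofPred_forall]
  exact (isClosed_le continuous_norm continuous_const).inter
    (isClosed_biInter fun w _ => isClosed_le continuous_const (by fun_prop))

lemma innerCompact_mono (G : Set ℂ) : Monotone (innerCompact G) := fun m n hmn z hz => by
  have hcast : (m : ℝ) ≤ n := mod_cast hmn
  refine ⟨hz.1.trans hcast, fun w hw => le_trans ?_ (hz.2 w hw)⟩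
  gcongr

lemma exists_ball_subset_innerCompact (hG : IsOpen G) (hz : z ∈ G) :
    ∃ d > 0, ∃ n, Metric.ball z d ⊆ innerCompact G n := by
  obtain ⟨d, hd, hball⟩ := Metric.isOpen_iff.1 hG z hz
  obtain ⟨n, hn⟩ := exists_nat_ge (max (‖z‖ + d) (1 / (d / 2)))
  refine ⟨d / 2, half_pos hd, n, fun y hy => ⟨?_, fun w hw => ?_⟩⟩
  · have hnorm := (le_max_left _ _).trans hn
    have htri := norm_le_norm_add_norm_sub' y z
    rw [Metric.mem_ball, dist_eq_norm] at hy
    linarith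
  · have hsmall : 1 / ((n : ℝ) + 1) ≤ d / 2 := by
      rw [one_div_le (by positivity) (by positivity)]
      linarith [(le_max_right _ _).trans hn]
    have hfar : d ≤ dist w z := not_lt.1 fun h => hw (hball h)
    have htri := dist_triangle w y z
    rw [Metric.mem_ball] at hy
    rw [dist_comm w y] at htri
    linarith

lemma not_isBounded_connectedComponentIn_compl_of_subset_closedBall {R : ℝ}
    (hR : 0 ≤ R) (hK : K ⊆ Metric.closedBall 0 R) (hz : R < ‖z‖) :
    ¬ Bornology.IsBounded (connectedComponentIn Kᶜ z) := by
  have hz0 : 0 < ‖z‖ := hR.trans_lt hz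
  have hnorm : ∀ t : ℝ, 1 ≤ t → ‖t • z‖ = t * ‖z‖ := fun t ht => by
    rw [norm_smul, Real.norm_of_nonneg (zero_le_one.trans ht)]
  have hray : (fun t : ℝ => t • z) '' Ici 1 ⊆ connectedComponentIn Kᶜ z := by
    refine (isPreconnected_Ici.image _ (by fun_prop)).subset_connectedComponentIn
      ⟨1, self_mem_Ici, one_smul ℝ z⟩ ?_
    rintro _ ⟨t, ht, rfl⟩ htK
    have hle := mem_closedBall_zero_iff.1 (hK htK)
    rw [hnorm t ht] at hle
    exact (hz.trans_le (le_mul_of_one_le_left hz0.le ht)).not_ge hle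
  intro hbdd
  obtain ⟨M, hM⟩ := (Metric.isBounded_iff_subset_closedBall 0).1 hbdd
  have ht : 1 ≤ |M| / ‖z‖ + 1 := le_add_of_nonneg_left (by positivity)
  have hle := mem_closedBall_zero_iff.1 (hM (hray ⟨_, ht, rfl⟩))
  rw [hnorm _ ht, add_mul, div_mul_cancel₀ _ hz0.ne', one_mul] at hle
  linarith [le_abs_self M]

/- A bounded component would lie in `G`, yet it contains a ball around a point outside `G`. -/
lemma not_isBounded_connectedComponentIn_compl_innerCompact
    (hG : IsPreconnected ((↑) '' G : Set (OnePoint ℂ))ᶜ) {n : ℕ} (hz : z ∉ innerCompact G n) :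
    ¬ Bornology.IsBounded (connectedComponentIn (innerCompact G n)ᶜ z) := by
  rcases lt_or_ge (n : ℝ) ‖z‖ with hn | hn
  · exact not_isBounded_connectedComponentIn_compl_of_subset_closedBall n.cast_nonneg
      (fun w hw => mem_closedBall_zero_iff.2 hw.1) hn
  · intro hbdd
    have hclosed := (isCompact_innerCompact G n).isClosed
    have hWo := hclosed.isOpen_compl.connectedComponentIn (x := z)
    have hfr : frontier (connectedComponentIn (innerCompact G n)ᶜ z) ⊆ G := by
      rw [hWo.frontier_eq]
      exact fun y hy => innerCompact_subset G n
        ((closure_connectedComponentIn_compl_subset hclosed z hy.1).resolve_left hy.2)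
    have hWG := subset_of_frontier_subset_of_isPreconnected_compl hG hWo hbdd.isCompact_closure hfr
    obtain ⟨w, hwG, hw⟩ : ∃ w ∉ G, dist z w < 1 / ((n : ℝ) + 1) := by
      by_contra! hfar
      exact hz ⟨hn, hfar⟩
    have hball : Metric.ball w (1 / ((n : ℝ) + 1)) ⊆ connectedComponentIn (innerCompact G n)ᶜ z :=
      (convex_ball w _).isPreconnected.subset_connectedComponentIn hw
        fun y hy hyK => (hyK.2 w hwG).not_gt hy
    exact hwG (hWG (hball (Metric.mem_ball_self (by positivity))))

end InnerCompact

section Primitives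

variable {G : Set ℂ} {g : ℂ → ℂ}

lemma exists_polynomial_tendstoLocallyUniformlyOn (hG : IsOpen G)
    (hcompl : IsPreconnected ((↑) '' G : Set (OnePoint ℂ))ᶜ) (hg : DifferentiableOn ℂ g G) :
    ∃ P : ℕ → ℂ[X], TendstoLocallyUniformlyOn (fun n z => (P n).eval z) g atTop G := by
  have happrox : ∀ n : ℕ, ∃ P : ℂ[X], ∀ z ∈ innerCompact G n,
      ‖g z - P.eval z‖ < 1 / ((n : ℝ) + 1) := fun n =>
    exists_polynomial_norm_sub_lt_of_differentiableOn (isCompact_innerCompact G n)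
      (fun _ => not_isBounded_connectedComponentIn_compl_innerCompact hcompl) hG
      (innerCompact_subset G n) hg (by positivity)
  choose P hP using happrox
  refine ⟨P, Metric.tendstoLocallyUniformlyOn_iff.2 fun ε hε z hz => ?_⟩
  obtain ⟨d, hd, m, hball⟩ := exists_ball_subset_innerCompact hG hz
  refine ⟨_, mem_nhdsWithin_of_mem_nhds (Metric.ball_mem_nhds z hd), ?_⟩
  have hlim := tendsto_one_div_add_atTop_nhds_zero_nat (𝕜 := ℝ)
  filter_upwards [hlim.eventually_lt_const hε, eventually_ge_atTop m] with n hn hmn y hy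
  rw [dist_eq_norm]
  exact (hP n y (innerCompact_mono G hmn (hball hy))).trans hn

lemma cauchySeq_of_tendstoLocallyUniformlyOn_deriv {F F' : ℕ → ℂ → ℂ} {z₀ z : ℂ} (hG : IsOpen G)
    (hGc : IsPreconnected G) (hlim : TendstoLocallyUniformlyOn F' g atTop G)
    (hF : ∀ n, ∀ z ∈ G, HasDerivAt (F n) (F' n z) z) (hz₀ : z₀ ∈ G)
    (hcauchy : CauchySeq fun n => F n z₀) (hz : z ∈ G) : CauchySeq fun n => F n z := by
  refine (hGc.induction₂ (fun x y => (CauchySeq fun n => F n x) ↔ CauchySeq fun n => F n y)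
    (fun x hx => ?_) (fun _ _ _ _ _ _ => Iff.trans) (fun _ _ _ _ => Iff.symm) hz₀ hz).1 hcauchy
  obtain ⟨d, hd, hsub⟩ := Metric.nhds_basis_closedBall.mem_iff.1 (hG.mem_nhds hx)
  have hunif := (tendstoLocallyUniformlyOn_iff_tendstoUniformlyOn_of_compact
    (isCompact_closedBall x d)).1 (hlim.mono hsub)
  have hpropagate : ∀ {u v r}, Metric.ball u r ⊆ Metric.closedBall x d → v ∈ Metric.ball u r →
      (CauchySeq fun n => F n u) → CauchySeq fun n => F n v := fun hball hv hu =>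
    (uniformCauchySeqOn_ball_of_deriv (hunif.mono hball).uniformCauchySeqOn
      (fun n y hy => hF n y (hsub (hball hy))) hu).cauchySeq hv
  filter_upwards [mem_nhdsWithin_of_mem_nhds (Metric.ball_mem_nhds x (half_pos hd))] with y hy
  have hxball : Metric.ball x (d / 2) ⊆ Metric.closedBall x d :=
    Metric.ball_subset_closedBall.trans (Metric.closedBall_subset_closedBall (half_le_self hd.le))
  have hyball : Metric.ball y (d / 2) ⊆ Metric.closedBall x d :=
    (Metric.ball_subset_ball' (by linarith [Metric.mem_ball.1 hy])).trans
      Metric.ball_subset_closedBall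
  exact ⟨hpropagate hxball hy, hpropagate hyball (Metric.mem_ball_comm.1 hy)⟩

lemma exists_hasDerivAt_of_isPreconnected_compl (hG : IsOpen G) (hGc : IsPreconnected G)
    (hcompl : IsPreconnected ((↑) '' G : Set (OnePoint ℂ))ᶜ) (hg : DifferentiableOn ℂ g G) :
    ∃ F : ℂ → ℂ, ∀ z ∈ G, HasDerivAt F (g z) z := by
  rcases G.eq_empty_or_nonempty with rfl | ⟨z₀, hz₀⟩
  · exact ⟨0, fun z hz => absurd hz (notMem_empty z)⟩
  obtain ⟨P, hP⟩ := exists_polynomial_tendstoLocallyUniformlyOn hG hcompl hg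
  have hprim : ∀ n, ∃ Q : ℂ[X], derivative Q = P n ∧ Q.eval z₀ = 0 := fun n => by
    obtain ⟨Q, hQ⟩ := exists_derivative_eq (P n)
    exact ⟨Q - C (Q.eval z₀), by rw [derivative_sub, derivative_C, hQ, sub_zero], by simp⟩
  choose Q hQ hQ₀ using hprim
  have hderiv : ∀ n, ∀ z ∈ G, HasDerivAt (fun z => (Q n).eval z) ((P n).eval z) z :=
    fun n z _ => hQ n ▸ (Q n).hasDerivAt z
  have hcauchy₀ : CauchySeq fun n => (Q n).eval z₀ := by
    simpa only [hQ₀] using cauchySeq_const (0 : ℂ)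
  refine ⟨fun z => limUnder atTop fun n => (Q n).eval z, fun z hz => ?_⟩
  exact hasDerivAt_of_tendstoLocallyUniformlyOn hG hP (Eventually.of_forall hderiv)
    (fun x hx => (cauchySeq_of_tendstoLocallyUniformlyOn_deriv hG hGc hP hderiv hz₀ hcauchy₀
      hx).tendsto_limUnder) hz

lemma exists_iteratedDeriv_eq_of_isPreconnected_compl (hG : IsOpen G) (hGc : IsPreconnected G)
    (hcompl : IsPreconnected ((↑) '' G : Set (OnePoint ℂ))ᶜ) (hg : DifferentiableOn ℂ g G)
    (n : ℕ) : ∃ φ : ℂ → ℂ, DifferentiableOn ℂ φ G ∧ ∀ z ∈ G, iteratedDeriv n φ z = g z := by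
  induction n generalizing g with
  | zero => exact ⟨g, hg, fun z _ => by rw [iteratedDeriv_zero]⟩
  | succ n ih =>
    obtain ⟨F, hF⟩ := exists_hasDerivAt_of_isPreconnected_compl hG hGc hcompl hg
    obtain ⟨φ, hφ, hφF⟩ := ih fun z hz => (hF z hz).differentiableAt.differentiableWithinAt
    refine ⟨φ, hφ, fun z hz => ?_⟩
    have heq : iteratedDeriv n φ =ᶠ[𝓝 z] F := by
      filter_upwards [hG.mem_nhds hz] with y hy using hφF y hy
    rw [iteratedDeriv_succ, heq.deriv_eq, (hF z hz).deriv]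

end Primitives

lemma IsRectifiableJordanCurve.exists_isReparametrization {δ : ℝ → ℂ} {a b : ℝ}
    (hδ : IsRectifiableJordanCurve δ a b) :
    ∃ (γ : ℝ → ℂ) (L : ℝ) (s : ℝ → ℝ),
      IsReparametrization δ a b γ L s ∧ IsLipschitzLoop γ L ∧ InjOn γ (Ico 0 L) := by
  obtain ⟨hab, hcont, hbv, hclosed, hinj⟩ := hδ
  obtain ⟨γ, L, s, hγ, hs⟩ := exists_lipschitz_isReparametrization hab.le hcont hbv
  have hloop : γ 0 = γ L := by
    rw [← hs.map_left, ← hs.map_right, hs.comp_eq a (left_mem_Icc.2 hab.le),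
      hs.comp_eq b (right_mem_Icc.2 hab.le), hclosed]
  exact ⟨γ, L, s, hs, ⟨hs.length_pos hab hinj, hγ, hloop⟩, hs.injOn_Ico hinj⟩

lemma IsHole.isJordanRegion {Ω E : Set ℂ} {γ : ℝ → ℂ} {L : ℝ} {x : ℂ} (h : IsHole Ω E)
    (hγ : IsLipschitzLoop γ L) (hinj : InjOn γ (Ico 0 L))
    (hE : E = closure (connectedComponentIn (γ '' Icc 0 L)ᶜ x)) (hbdd : Bornology.IsBounded E)
    (hfr : frontier E = γ '' Icc 0 L) : IsJordanRegion E γ L where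
  toIsLipschitzLoop := hγ
  injOn := hinj
  isCompact := Metric.isCompact_of_isClosed_isBounded (hE ▸ isClosed_closure) hbdd
  frontier_eq := hfr
  isPreconnected_interior := by
    subst hE
    rw [interior_closure_connectedComponentIn_compl (isCompact_image_Icc hγ.lipschitz).isClosed hfr]
    exact isPreconnected_connectedComponentIn
  not_isBounded_component := fun z hz => h.not_isBounded_connectedComponentIn_compl
    (Metric.isCompact_of_isClosed_isBounded (hE ▸ isClosed_closure) hbdd) hz

lemma IsJordanRegion.frontier_nonempty {E : Set ℂ} {γ : ℝ → ℂ} {L : ℝ}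
    (hE : IsJordanRegion E γ L) : (frontier E).Nonempty :=
  hE.frontier_eq ▸ ⟨γ 0, mem_image_of_mem γ (left_mem_Icc.2 hE.length_pos.le)⟩

open OnePoint in
/-- Let `Ω ⊆ ℂ` be a domain whose complement in the Riemann sphere `ℂ ∪ {∞}` has exactly two
connected components: `V₀ ∋ ∞` and (the copy of) `E`, where `E` is the closure of the Jordan
domain `U` bounded by a rectifiable Jordan curve `δ` and the boundary of `E` is the image `δ*`
of `δ`. Let `f` be holomorphic on `Ω` and continuous on `Ω ∪ δ*`. Then the following are
equivalent: (i) `f` admits one-valued primitives of all orders on `Ω`;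
(ii) `∫_δ P(z) f(z) dz = 0` for every analytic polynomial `P`;
(iii) `f` extends holomorphically to `Ω ∪ E`. -/
theorem statement7 (Ω : Set ℂ) (hΩopen : IsOpen Ω) (hΩconn : IsConnected Ω)
    (δ : ℝ → ℂ) (a b : ℝ) (hδ : IsRectifiableJordanCurve δ a b)
    (U : Set ℂ) (hUbdd : Bornology.IsBounded U)
    (hUcomp : ∃ x : ℂ, U = connectedComponentIn ((δ '' Set.Icc a b)ᶜ) x)
    (E : Set ℂ) (hE : E = closure U)
    (hfront : frontier E = δ '' Set.Icc a b)
    (V₀ : Set (OnePoint ℂ))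
    (hV₀ : V₀ = connectedComponentIn (((fun z : ℂ => (z : OnePoint ℂ)) '' Ω)ᶜ) ∞)
    (hcover : ((fun z : ℂ => (z : OnePoint ℂ)) '' Ω)ᶜ
      = V₀ ∪ (fun z : ℂ => (z : OnePoint ℂ)) '' E)
    (hEcomp : ∃ z ∈ E, (fun z : ℂ => (z : OnePoint ℂ)) '' E
      = connectedComponentIn (((fun z : ℂ => (z : OnePoint ℂ)) '' Ω)ᶜ) (z : OnePoint ℂ))
    (f : ℂ → ℂ) (hf : DifferentiableOn ℂ f Ω)
    (hfcont : ContinuousOn f (Ω ∪ δ '' Set.Icc a b)) :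
    ((∀ n : ℕ, 1 ≤ n → ∃ φ : ℂ → ℂ, DifferentiableOn ℂ φ Ω ∧
        ∀ z ∈ Ω, iteratedDeriv n φ z = f z) ↔
      (∀ P : Polynomial ℂ, IsRSIntegral (fun z => P.eval z * f z) δ a b 0)) ∧
    ((∀ P : Polynomial ℂ, IsRSIntegral (fun z => P.eval z * f z) δ a b 0) ↔
      (∃ g : ℂ → ℂ, DifferentiableOn ℂ g (Ω ∪ E) ∧ Set.EqOn g f Ω)) := by
  obtain ⟨γ, L, s, hs, hγ, hinj⟩ := hδ.exists_isReparametrization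
  obtain ⟨x, rfl⟩ := hUcomp
  obtain ⟨z₀, -, hz₀⟩ := hEcomp
  have hhole : IsHole Ω E := isHole_of_connectedComponentIn hΩopen hΩconn (hV₀ ▸ hcover) hz₀
  rw [← hs.image_eq] at hE hfront hfcont
  have hregion : IsJordanRegion E γ L :=
    hhole.isJordanRegion hγ hinj hE (hE ▸ hs.image_eq ▸ hUbdd.closure) hfront
  have hEconn : IsPreconnected E := hE ▸ isPreconnected_connectedComponentIn.closure
  have hmoment : ∀ P : ℂ[X], IsRSIntegral (fun z => P.eval z * f z) δ a b 0 ↔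
      contourIntegral γ L (fun z => P.eval z * f z) = 0 := fun P =>
    hs.isRSIntegral_zero_iff hγ.lipschitz
      (P.continuous.continuousOn.mul (hfcont.mono subset_union_right))
  simp only [hmoment]
  have hextend := hregion.exists_extension_of_moments_eq_zero hhole.isOpen hhole.disjoint
    hhole.isOpen_union hf hfcont
  have hvanish := hregion.contourIntegral_polynomial_mul_eq_zero hhole.isOpen
    hhole.isOpen_union hfcont
  have hprimitive : (∃ g : ℂ → ℂ, DifferentiableOn ℂ g (Ω ∪ E) ∧ EqOn g f Ω) → ∀ n : ℕ, 1 ≤ n →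
      ∃ φ : ℂ → ℂ, DifferentiableOn ℂ φ Ω ∧ ∀ z ∈ Ω, iteratedDeriv n φ z = f z := by
    rintro ⟨g, hg, hgf⟩ n -
    obtain ⟨φ, hφ, hφg⟩ := exists_iteratedDeriv_eq_of_isPreconnected_compl hhole.isOpen_union
      (hhole.isPreconnected_union hEconn hregion.isCompact.isClosed hregion.frontier_nonempty)
      hhole.isPreconnected_compl hg n
    exact ⟨φ, hφ.mono subset_union_left, fun z hz => (hφg z (Or.inl hz)).trans (hgf hz)⟩
  exact ⟨⟨hvanish, fun h => hprimitive (hextend h)⟩, hextend, fun h => hvanish (hprimitive h)⟩
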